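/- Let p ≡ 1 (mod 16) be a prime and let K = ℚ(⁴√p) with class number h_K. Then 2 ∥ h_K (i.e., 2 ∣ h_K and 4 ∤ h_K) if and only if the quartic residue symbol (2/p)₄ equals −1, i.e., if and only if 2 is not a fourth power modulo p. -/

import Mathlib

open Polynomial NumberField

/-!
Let `k = ℚ(√p) ⊆ K`, with rings of integers `R ⊆ S`, and let `r = ⁴√p`. For an ideal `A` of `S`
let `χ(A) ∈ 𝔽_p` be the `(p - 1) / 4`-th power of the prime-to-`p` part of its absolute norm. Modulo
`r` every element of `S` is an integer, and the norm of an integer to `ℚ` is its fourth power, so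
`χ` is trivial on principal ideals prime to `r` and descends to a character `Cl(K) → {±1}`. By
Dirichlet there is a prime `q ≡ 3 (mod 4)` which is a quadratic but not a quartic residue modulo
`p`; since `p` is then a fourth power modulo `q`, there is an ideal of norm `q`, so `χ` is
nontrivial and `2 ∣ h_K`.

The class number of `k` is odd and its fundamental unit has norm `-1`, and the only primes of `k`
which ramify in `K` are `(w)`, where `w = √p`, and one prime above `2`. So a class `c` with `c² = 1`
is governed by the ramified prime `Q` above `2`, for which `χ(Q) = 2 ^ ((p - 1) / 4)`, and by the
units. If `2` is not a quartic residue then `χ(c) = -1` for every `c ≠ 1` with `c² = 1`, so `ker χ`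
has odd order and `4 ∤ h_K`. If `2` is a quartic residue then `χ(c) = 1` for all such `c`, which
together with `χ ≠ 1` forces `4 ∣ h_K`; the classes coming from a unit of norm `-1` are handled by
a Gauss sum criterion for quartic residues.
-/

namespace PureQuartic

/-! ### Power residues in finite fields -/

section PowerResidues

theorem mem_range_powMonoidHom_iff {G : Type*} [CommGroup G] [IsCyclic G] [Finite G] {n : ℕ}
    (hn : n ∣ Nat.card G) {x : G} :
    x ∈ (powMonoidHom n : G →* G).range ↔ x ^ (Nat.card G / n) = 1 := by
  have hle : (powMonoidHom n : G →* G).range ≤ (powMonoidHom (Nat.card G / n) : G →* G).ker := by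
    rintro _ ⟨y, rfl⟩
    simp only [MonoidHom.mem_ker, powMonoidHom_apply, ← pow_mul, Nat.mul_div_cancel' hn,
      pow_card_eq_one']
  have hcard : Nat.card (powMonoidHom (Nat.card G / n) : G →* G).ker ≤
      Nat.card (powMonoidHom n : G →* G).range := by
    rw [IsCyclic.card_powMonoidHom_ker, IsCyclic.card_powMonoidHom_range,
      Nat.gcd_eq_right (Nat.div_dvd_of_dvd hn), Nat.gcd_eq_right hn]
  rw [Subgroup.eq_of_le_of_card_ge hle hcard, MonoidHom.mem_ker, powMonoidHom_apply]

variable {F : Type*} [Field F] [Finite F]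

theorem exists_pow_eq_iff_pow_eq_one {n : ℕ} (hn : n ∣ Nat.card F - 1) {x : F} (hx : x ≠ 0) :
    (∃ y, y ^ n = x) ↔ x ^ ((Nat.card F - 1) / n) = 1 := by
  lift x to Fˣ using hx.isUnit
  have hn0 : n ≠ 0 := by
    rintro rfl
    exact Nat.sub_ne_zero_of_lt Finite.one_lt_card (zero_dvd_iff.1 hn)
  rw [← Nat.card_units] at hn ⊢
  rw [← Units.val_pow_eq_pow_val, Units.val_eq_one, ← mem_range_powMonoidHom_iff hn]
  constructor
  · rintro ⟨y, hy⟩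
    lift y to Fˣ using (isUnit_pow_iff hn0).1 (hy ▸ x.isUnit)
    exact ⟨y, Units.ext hy⟩
  · rintro ⟨y, rfl⟩
    exact ⟨y, rfl⟩

theorem exists_pow_orderOf_eq_of_apply_eq_one {R : Type*} [CommRing R] [Nontrivial R]
    {χ : MulChar F R} {x : F} (hx : χ x = 1) : ∃ y, y ^ orderOf χ = x := by
  have hx0 : IsUnit x := by
    by_contra h
    exact zero_ne_one ((χ.map_nonunit h).symm.trans hx)
  lift x to Fˣ using hx0
  obtain ⟨g, hg⟩ := IsCyclic.exists_generator (α := Fˣ)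
  obtain ⟨m, rfl⟩ := mem_powers_iff_mem_zpowers.2 (hg x)
  have hm : χ ^ m = 1 := by
    rw [MulChar.eq_iff hg, MulChar.pow_apply_coe, ← map_pow, MulChar.one_apply_coe]
    simpa using hx
  obtain ⟨l, rfl⟩ := orderOf_dvd_of_pow_eq_one hm
  exact ⟨(g ^ l : Fˣ), by simp [← pow_mul, mul_comm]⟩

end PowerResidues

/-! ### Quartic Jacobi sums -/

section JacobiSums

theorem isPrimitiveRoot_gaussianInt_i : IsPrimitiveRoot (⟨0, 1⟩ : GaussianInt) 4 := by
  rw [IsPrimitiveRoot.iff (by norm_num)]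
  refine ⟨by decide, fun l _ _ ↦ ?_⟩
  interval_cases l <;> decide

theorem ringHomComp_star_eq_inv {R : Type*} [CommMonoid R] (χ : MulChar R GaussianInt) :
    χ.ringHomComp (starRingEnd GaussianInt) = χ⁻¹ := by
  rw [eq_comm, inv_eq_iff_mul_eq_one]
  refine MulChar.ext fun u ↦ ?_
  have hu : (χ u).norm = 1 := (Zsqrtd.norm_eq_one_iff' (by norm_num) _).2 (u.isUnit.map χ)
  rw [MulChar.mul_apply, MulChar.ringHomComp_apply, MulChar.one_apply_coe, starRingEnd_apply,
    ← Zsqrtd.norm_eq_mul_conj, hu, Int.cast_one]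

variable {F : Type*} [Field F] [Fintype F]

theorem jacobiSum_inv_inv_eq_star (χ φ : MulChar F GaussianInt) :
    jacobiSum χ⁻¹ φ⁻¹ = star (jacobiSum χ φ) := by
  rw [← ringHomComp_star_eq_inv, ← ringHomComp_star_eq_inv, jacobiSum_ringHomComp]
  rfl

theorem norm_jacobiSum {χ φ : MulChar F GaussianInt} (hχ : χ ≠ 1) (hφ : φ ≠ 1)
    (hχφ : χ * φ ≠ 1) : (jacobiSum χ φ).norm = Fintype.card F := by
  have hinj : Function.Injective GaussianInt.toComplex := fun _ _ ↦ GaussianInt.toComplex_inj.1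
  have hchar : ringChar ℂ ≠ ringChar F := by
    rw [ringChar.eq_zero]
    exact (CharP.ringChar_ne_zero_of_finite F).symm
  have hJ := jacobiSum_mul_jacobiSum_inv hchar ((MulChar.ringHomComp_ne_one_iff hinj).2 hχ)
    ((MulChar.ringHomComp_ne_one_iff hinj).2 hφ)
    (by rwa [← MulChar.ringHomComp_mul, MulChar.ringHomComp_ne_one_iff hinj])
  rw [MulChar.ringHomComp_inv, MulChar.ringHomComp_inv, jacobiSum_ringHomComp,
    jacobiSum_ringHomComp, ← map_mul, jacobiSum_inv_inv_eq_star,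
    ← Zsqrtd.norm_eq_mul_conj, map_intCast] at hJ
  exact_mod_cast hJ

/-- The involution `x ↦ 1 - x` pairs equal terms of `J(χ, χ)`, and its fixed point contributes a
square. -/
theorem even_im_jacobiSum_self (χ : MulChar F GaussianInt) : Even (jacobiSum χ χ).im := by
  let im₂ : GaussianInt →+ ZMod 2 :=
    { toFun := fun z ↦ z.im, map_zero' := by simp, map_add' := by simp }
  have him_sq (z : GaussianInt) : im₂ (z * z) = 0 :=
    (ZMod.intCast_zmod_eq_zero_iff_dvd _ 2).2 ⟨z.re * z.im, by simp; ring⟩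
  have hsum : im₂ (jacobiSum χ χ) = 0 := by
    classical
    rw [jacobiSum, map_sum]
    refine Finset.sum_involution (fun x _ ↦ 1 - x) (fun x _ ↦ ?_) (fun x _ hne hfix ↦ hne ?_)
      (fun _ _ ↦ Finset.mem_univ _) (fun _ _ ↦ sub_sub_cancel _ _)
    · rw [sub_sub_cancel, mul_comm (χ (1 - x))]
      exact CharTwo.add_self_eq_zero _
    · rw [hfix, him_sq]
  exact even_iff_two_dvd.2 ((ZMod.intCast_zmod_eq_zero_iff_dvd _ 2).1 hsum)

theorem exists_mulChar_gaussianInt {p : ℕ} [Fact p.Prime] (hp : 4 ∣ p - 1) :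
    ∃ χ : MulChar (ZMod p) GaussianInt, orderOf χ = 4 ∧
      (jacobiSum χ χ).re ^ 2 + (jacobiSum χ χ).im ^ 2 = p ∧ Even (jacobiSum χ χ).im := by
  obtain ⟨χ, hχ⟩ := MulChar.exists_mulChar_orderOf (ZMod p) (by rwa [ZMod.card])
    isPrimitiveRoot_gaussianInt_i
  have hχ_pow {n : ℕ} (h0 : n ≠ 0) (h4 : n < 4) : χ ^ n ≠ 1 :=
    pow_ne_one_of_lt_orderOf h0 (hχ ▸ h4)
  have hχ1 : χ ≠ 1 := by simpa using hχ_pow one_ne_zero (by norm_num)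
  have hnorm := norm_jacobiSum hχ1 hχ1 (by simpa [sq] using hχ_pow two_ne_zero (by norm_num))
  rw [Zsqrtd.norm_def, ZMod.card] at hnorm
  exact ⟨χ, hχ, by linear_combination hnorm, even_im_jacobiSum_self χ⟩

end JacobiSums

/-! ### A Gauss sum criterion for quartic residues -/

section QuarticCharacters

variable {M E : Type*} [CommMonoid M] [Field E]

theorem isQuadratic_sq {χ : MulChar M E} (hχ : χ ^ 4 = 1) : (χ ^ 2).IsQuadratic := by
  intro x
  by_cases hx : IsUnit x
  · lift x to Mˣ using hx
    refine Or.inr (sq_eq_one_iff.1 ?_)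
    rw [MulChar.pow_apply_coe, ← pow_mul, ← MulChar.pow_apply_coe, hχ, MulChar.one_apply_coe]
  · exact Or.inl (MulChar.map_nonunit _ hx)

theorem exists_apply_sq_eq_neg_one {R : Type*} [CommRing R] [IsDomain R] {χ : MulChar M R}
    (hχ : orderOf χ = 4) : ∃ u : Mˣ, χ u ^ 2 = -1 := by
  have hne : χ ^ 2 ≠ 1 := pow_ne_one_of_lt_orderOf two_ne_zero (hχ ▸ by norm_num)
  obtain ⟨u, hu⟩ := MulChar.ne_one_iff.1 hne
  rw [MulChar.pow_apply_coe] at hu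
  refine ⟨u, (sq_eq_one_iff.1 ?_).resolve_left hu⟩
  rw [← pow_mul, ← MulChar.pow_apply_coe, show 2 * 2 = orderOf χ from hχ.symm, pow_orderOf_eq_one,
    MulChar.one_apply_coe]

theorem orderOf_ringHomComp_eq_four {R : Type*} [CommRing R] [IsDomain R] (f : R →+* E)
    (h2 : (2 : E) ≠ 0) {χ : MulChar M R} (hχ : orderOf χ = 4) :
    orderOf (χ.ringHomComp f) = 4 := by
  refine orderOf_eq_prime_pow (p := 2) (n := 1) (fun h ↦ h2 ?_) ?_
  · obtain ⟨u, hu⟩ := exists_apply_sq_eq_neg_one hχ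
    have h1 := congrArg (fun ξ : MulChar M E ↦ ξ u) h
    simp only [pow_one, MulChar.pow_apply_coe, MulChar.ringHomComp_apply, ← map_pow, hu, map_neg,
      map_one, MulChar.one_apply_coe] at h1
    linear_combination -h1
  · rw [MulChar.ringHomComp_pow, show 2 ^ (1 + 1) = orderOf χ from hχ.symm, pow_orderOf_eq_one,
      MulChar.ringHomComp_one]

end QuarticCharacters

section QuarticGaussSums

variable {k E : Type*} [Field k] [Fintype k] [Field E]

theorem gaussSum_add_gaussSum_inv_sq {ξ : MulChar k E} (hξ : orderOf ξ = 4) (hneg : ξ (-1) = 1)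
    {ψ : AddChar k E} (hψ : ψ.IsPrimitive) :
    (gaussSum ξ ψ + gaussSum ξ⁻¹ ψ) ^ 2 =
      gaussSum (ξ ^ 2) ψ * (jacobiSum ξ ξ + jacobiSum ξ⁻¹ ξ⁻¹) + 2 * Fintype.card k := by
  have hξ4 : ξ ^ 4 = 1 := hξ ▸ pow_orderOf_eq_one ξ
  have hinv : ξ⁻¹ * ξ⁻¹ = ξ ^ 2 := by
    rw [← mul_inv, ← sq, inv_eq_iff_mul_eq_one, ← pow_add, hξ4]
  have hξ2 : ξ ^ 2 ≠ 1 := pow_ne_one_of_lt_orderOf two_ne_zero (hξ ▸ by norm_num)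
  have hξ1 : ξ ≠ 1 := by
    rintro rfl
    exact hξ2 (one_pow 2)
  have h1 := jacobiSum_mul_nontrivial (sq ξ ▸ hξ2) ψ
  have h2 := jacobiSum_mul_nontrivial (hinv ▸ hξ2) ψ
  have h3 := gaussSum_mul_gaussSum_pow_orderOf_sub_one hξ1 hψ
  rw [← sq] at h1
  rw [hinv] at h2
  rw [hξ, hneg, one_mul, show ξ ^ (4 - 1) = ξ⁻¹ from eq_inv_of_mul_eq_one_left (by
    rw [← pow_succ, hξ4])] at h3
  linear_combination -h1 - h2 + 2 * h3

theorem gaussSum_pow_char_pow (q n : ℕ) [Fact q.Prime] [CharP E q] (ξ : MulChar k E)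
    (ψ : AddChar k E) : gaussSum ξ ψ ^ q ^ n = gaussSum (ξ ^ q ^ n) (ψ ^ q ^ n) := by
  induction n with
  | zero => simp only [pow_zero, pow_one]
  | succ n ih => rw [pow_succ, pow_mul, ih, gaussSum_frob, ← pow_mul, ← pow_mul]

theorem gaussSum_add_gaussSum_inv_pow_char_pow {q : ℕ} (n : ℕ) [Fact q.Prime] [CharP E q]
    (hq : Odd q) {ξ : MulChar k E} (hξ : ξ ^ 4 = 1) {u : kˣ} (hu : (u : k) = (q ^ n : ℕ))
    (hξu : ξ u ^ 2 = 1) (ψ : AddChar k E) :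
    (gaussSum ξ ψ + gaussSum ξ⁻¹ ψ) ^ q ^ n = ξ u * (gaussSum ξ ψ + gaussSum ξ⁻¹ ψ) := by
  have hinv : ξ⁻¹ u = ξ u := by
    rw [MulChar.inv_apply_eq_inv']
    exact inv_eq_of_mul_eq_one_left (sq (ξ u) ▸ hξu)
  have hcube : ξ ^ 3 = ξ⁻¹ := eq_inv_of_mul_eq_one_left (by rw [← pow_succ, hξ])
  have hmod : q ^ n % 4 = 1 ∨ q ^ n % 4 = 3 := by
    have := Nat.odd_iff.1 (hq.pow (n := n))
    omega
  rw [add_pow_char_pow, gaussSum_pow_char_pow, gaussSum_pow_char_pow, AddChar.pow_mulShift, ← hu,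
    gaussSum_mulShift_eq, gaussSum_mulShift_eq, inv_pow, inv_inv, pow_eq_pow_mod _ hξ]
  rcases hmod with h | h
  · rw [h, pow_one, hinv, mul_add]
  · rw [h, hcube, inv_inv, hinv]
    ring

theorem exists_isPrimitive_gaussSum_sq_eq {p : ℕ} [Fact p.Prime] {ζ : E} (hζ : IsPrimitiveRoot ζ p)
    {ξ : MulChar (ZMod p) E} (hξ : orderOf ξ = 4) (hneg : ξ (-1) = 1) {w : E} (hw : w ^ 2 = p) :
    ∃ ψ : AddChar (ZMod p) E, ψ.IsPrimitive ∧ gaussSum (ξ ^ 2) ψ = w := by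
  have hξ4 : ξ ^ 4 = 1 := hξ ▸ pow_orderOf_eq_one ξ
  have hξ2 : ξ ^ 2 ≠ 1 := pow_ne_one_of_lt_orderOf two_ne_zero (hξ ▸ by norm_num)
  have hquad := isQuadratic_sq hξ4
  let ψ := AddChar.zmodChar p hζ.pow_eq_one
  have hψ : ψ.IsPrimitive := AddChar.zmodChar_primitive_of_primitive_root p hζ
  have hsq : gaussSum (ξ ^ 2) ψ ^ 2 = w ^ 2 := by
    rw [gaussSum_sq hξ2 hquad hψ, MulChar.pow_apply' _ two_ne_zero, hneg, ZMod.card, hw]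
    ring
  rcases sq_eq_sq_iff_eq_or_eq_neg.1 hsq with h | h
  · exact ⟨ψ, hψ, h⟩
  · obtain ⟨u, hu⟩ := exists_apply_sq_eq_neg_one hξ
    refine ⟨ψ.mulShift u, fun a ha ↦ ?_, ?_⟩
    · rw [AddChar.mulShift_mulShift]
      exact hψ (mul_ne_zero u.ne_zero ha)
    · rw [gaussSum_mulShift_eq, hquad.inv, MulChar.pow_apply_coe, hu, h]
      ring

/-- `R = G(ξ) + G(ξ⁻¹)` satisfies `R² = ρ²`, so it is fixed by the `q ^ n`-power Frobenius, which
on the other hand multiplies it by `ξ (q ^ n)`. -/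
theorem apply_eq_one_of_sq_eq {p : ℕ} [Fact p.Prime] {ζ : E} (hζ : IsPrimitiveRoot ζ p)
    {q n : ℕ} [Fact q.Prime] [CharP E q] (hq : Odd q)
    {ξ : MulChar (ZMod p) E} (hξ : orderOf ξ = 4) (hneg : ξ (-1) = 1)
    {u : (ZMod p)ˣ} (hu : (u : ZMod p) = (q ^ n : ℕ)) (hξu : ξ u ^ 2 = 1)
    {w ρ : E} (hw : w ^ 2 = p) (hρ0 : ρ ≠ 0) (hρN : ρ ^ q ^ n = ρ)
    (hρ : ρ ^ 2 = w * (2 * w + (jacobiSum ξ ξ + jacobiSum ξ⁻¹ ξ⁻¹))) : ξ u = 1 := by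
  obtain ⟨ψ, hψ, hGw⟩ := exists_isPrimitive_gaussSum_sq_eq hζ hξ hneg hw
  set R := gaussSum ξ ψ + gaussSum ξ⁻¹ ψ with hR
  have hsq : R ^ 2 = ρ ^ 2 := by
    rw [hR, gaussSum_add_gaussSum_inv_sq hξ hneg hψ, hGw, ZMod.card, hρ]
    linear_combination -2 * hw
  have hR0 : R ≠ 0 := by
    rintro h
    rw [h, zero_pow two_ne_zero] at hsq
    exact hρ0 (pow_eq_zero_iff two_ne_zero |>.1 hsq.symm)
  have hfix : R ^ q ^ n = R := by
    rcases sq_eq_sq_iff_eq_or_eq_neg.1 hsq with h | h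
    · rw [h, hρN]
    · rw [h, hq.pow.neg_pow, hρN]
  have hfrob : R ^ q ^ n = ξ u * R :=
    gaussSum_add_gaussSum_inv_pow_char_pow n hq (hξ ▸ pow_orderOf_eq_one ξ) hu hξu ψ
  exact mul_right_cancel₀ hR0 (by rw [← hfrob, hfix, one_mul])

end QuarticGaussSums

section QuarticCriterion

variable {p : ℕ} [Fact p.Prime]

theorem exists_pow_four_eq_neg_one (hp : 8 ∣ p - 1) : ∃ y : ZMod p, y ^ 4 = -1 := by
  obtain ⟨m, hm⟩ := hp
  rw [exists_pow_eq_iff_pow_eq_one (by rw [Nat.card_zmod]; omega) (neg_ne_zero.2 one_ne_zero),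
    Nat.card_zmod, show (p - 1) / 4 = 2 * m by omega, pow_mul, neg_one_sq, one_pow]

theorem map_add_map_star {E : Type*} [CommRing E] (f : GaussianInt →+* E) (z : GaussianInt) :
    f z + f (star z) = 2 * (z.re : E) := by
  have hz : z + star z = ((2 * z.re : ℤ) : GaussianInt) := by
    ext
    · simp [two_mul]
    · simp
  rw [← map_add, hz, map_intCast]
  push_cast
  rfl

theorem apply_pow_eq_one_of_orderOf_eq {M E : Type*} [CommMonoid M] [CommRing E]
    {χ : MulChar M E} {n : ℕ} (hχ : orderOf χ = n) (u : Mˣ) : χ u ^ n = 1 := by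
  rw [← hχ, ← MulChar.pow_apply_coe, pow_orderOf_eq_one, MulChar.one_apply_coe]

theorem apply_neg_one_eq_one {E : Type*} [CommRing E] (hp : 8 ∣ p - 1) {χ : MulChar (ZMod p) E}
    (hχ : orderOf χ = 4) : χ (-1) = 1 := by
  obtain ⟨y, hy⟩ := exists_pow_four_eq_neg_one hp
  lift y to (ZMod p)ˣ using (isUnit_pow_iff four_ne_zero).1 (hy ▸ isUnit_one.neg)
  rw [← hy, map_pow, apply_pow_eq_one_of_orderOf_eq hχ]

theorem exists_pow_four_eq_natCard (hp : 8 ∣ p - 1) {χ : MulChar (ZMod p) GaussianInt}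
    (hχ : orderOf χ = 4) {F : Type*} [Field F] [Finite F] (h2 : (2 : F) ≠ 0) (hpF : (p : F) ≠ 0)
    (hF : IsSquare (Nat.card F : ZMod p)) {w ρ : F} (hw : w ^ 2 = p) (hρ0 : ρ ≠ 0)
    (hρ : ρ ^ 2 = 2 * w * (w + (jacobiSum χ χ).re)) :
    ∃ y : ZMod p, y ^ 4 = Nat.card F := by
  rcases eq_or_ne (Nat.card F : ZMod p) 0 with hF0 | hF0
  · exact ⟨0, by rw [hF0, zero_pow four_ne_zero]⟩
  let E := AlgebraicClosure F
  let ι : F →+* E := algebraMap F E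
  have := Fintype.ofFinite F
  obtain ⟨q, hchar, n, hq, hcard⟩ := FiniteField.card' F
  rw [← Nat.card_eq_fintype_card] at hcard
  have : Fact q.Prime := ⟨hq⟩
  have : CharP E q := charP_of_injective_algebraMap ι.injective q
  have : NeZero (p : E) := ⟨by rw [← map_natCast ι]; exact (map_ne_zero ι).2 hpF⟩
  have h2E : (2 : E) ≠ 0 := by rw [← map_ofNat ι]; exact (map_ne_zero ι).2 h2
  have hqodd : Odd q := hq.odd_of_ne_two (by
    rintro rfl
    exact h2 (CharP.cast_eq_zero F 2))
  obtain ⟨ζ, hζ⟩ := HasEnoughRootsOfUnity.exists_primitiveRoot E p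
  obtain ⟨i, hi⟩ := IsAlgClosed.exists_pow_nat_eq (-1 : E) (n := 2) (by norm_num)
  let f : GaussianInt →+* E := Zsqrtd.lift ⟨i, by rw [← sq, hi, Int.cast_neg, Int.cast_one]⟩
  let ξ : MulChar (ZMod p) E := χ.ringHomComp f
  have hξ : orderOf ξ = 4 := orderOf_ringHomComp_eq_four f h2E hχ
  obtain ⟨t, ht⟩ := hF
  lift t to (ZMod p)ˣ using (left_ne_zero_of_mul (ht ▸ hF0)).isUnit
  have hJ : jacobiSum ξ ξ + jacobiSum ξ⁻¹ ξ⁻¹ = 2 * ((jacobiSum χ χ).re : E) := by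
    rw [MulChar.ringHomComp_inv, jacobiSum_ringHomComp, jacobiSum_ringHomComp,
      jacobiSum_inv_inv_eq_star, map_add_map_star]
  have hξt : ξ (t * t : (ZMod p)ˣ) = 1 := by
    refine apply_eq_one_of_sq_eq hζ hqodd (n := n) hξ
      (apply_neg_one_eq_one hp hξ) ?_ ?_ (w := ι w) (ρ := ι ρ) ?_ ((map_ne_zero ι).2 hρ0) ?_ ?_
    · rw [Units.val_mul, ← ht, hcard]
    · rw [Units.val_mul, map_mul, ← sq, ← pow_mul, apply_pow_eq_one_of_orderOf_eq hξ]
    · rw [← map_pow, hw, map_natCast]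
    · rw [← map_pow, ← hcard, Nat.card_eq_fintype_card, FiniteField.pow_card]
    · rw [hJ, ← map_pow, hρ]
      simp only [map_mul, map_add, map_ofNat, map_intCast]
      ring
  simpa only [hξ, Units.val_mul, ← ht] using exists_pow_orderOf_eq_of_apply_eq_one hξt

end QuarticCriterion

/-! ### An auxiliary prime and the negative Pell equation -/

section AuxiliaryPrime

theorem exists_prime_gt_and_eq_and_eq {m n : ℕ} [NeZero m] [NeZero n] (hmn : m.Coprime n)
    (a : (ZMod m)ˣ) (b : (ZMod n)ˣ) (N : ℕ) :
    ∃ q > N, q.Prime ∧ (q : ZMod m) = a ∧ (q : ZMod n) = b := by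
  let e := ZMod.chineseRemainder hmn
  have hunit : IsUnit (e.symm (a, b)) := (Prod.isUnit_iff.2 ⟨a.isUnit, b.isUnit⟩).map e.symm
  obtain ⟨q, hq, hprime, hqe⟩ := Nat.forall_exists_prime_gt_and_eq_mod hunit N
  have hqe' : (q : ZMod m × ZMod n) = (↑a, ↑b) := by
    rw [← map_natCast e, hqe, RingEquiv.apply_symm_apply]
  exact ⟨q, hq, hprime, congrArg Prod.fst hqe', congrArg Prod.snd hqe'⟩

theorem exists_pow_four_eq_of_isSquare {q : ℕ} [Fact q.Prime] (hq : q % 4 = 3) {x : ZMod q}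
    (hx : IsSquare x) : ∃ s, s ^ 4 = x := by
  obtain ⟨t, rfl⟩ := hx
  refine ⟨t ^ ((q + 1) / 4), ?_⟩
  rw [← pow_mul, Nat.div_mul_cancel (by omega), pow_succ, ZMod.pow_card]

theorem exists_prime_pow_eq_neg_one {p : ℕ} [hp : Fact p.Prime] (hmod : p % 4 = 1) :
    ∃ q : ℕ, q.Prime ∧ q % 4 = 3 ∧ q ≠ p ∧ (q : ZMod p) ^ ((p - 1) / 4) = -1 ∧
      ∃ s : ZMod q, s ^ 4 = p := by
  have hp2 : p ≠ 2 := by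
    rintro rfl
    omega
  obtain ⟨g, hg⟩ := FiniteField.exists_nonsquare (F := ZMod p) (by rwa [ZMod.ringChar_zmod_n])
  have hg0 : g ≠ 0 := by
    rintro rfl
    exact hg IsSquare.zero
  have hgp : g ^ (p / 2) = -1 := (ZMod.pow_div_two_eq_neg_one_or_one p hg0).resolve_left
    (mt (ZMod.euler_criterion p hg0).2 hg)
  have hcop : Nat.Coprime 4 p := ((Nat.coprime_primes Nat.prime_two hp.out).2 hp2.symm).pow_left 2
  obtain ⟨q, hpq, hq, hq3, hqg⟩ := exists_prime_gt_and_eq_and_eq hcop (-1) (Units.mk0 g hg0 ^ 2) p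
  have hq4 : q % 4 = 3 := by
    have := congrArg ZMod.val hq3
    rwa [ZMod.val_natCast] at this
  rw [Units.val_pow_eq_pow_val, Units.val_mk0] at hqg
  have : Fact q.Prime := ⟨hq⟩
  refine ⟨q, hq, hq4, hpq.ne', ?_, exists_pow_four_eq_of_isSquare hq4 ?_⟩
  · rw [hqg, ← pow_mul, ← hgp]
    congr 1
    omega
  · exact (ZMod.exists_sq_eq_prime_iff_of_mod_four_eq_one (p := p) (q := q) hmod
      (by omega)).1 (hqg ▸ IsSquare.sq g)

end AuxiliaryPrime

section NegativePell

theorem exists_eq_sq_of_mul_eq_sq {a b c : ℤ} (ha : 0 < a) (hb : 0 < b) (hab : IsCoprime a b)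
    (h : a * b = c ^ 2) : ∃ m n : ℤ, a = m ^ 2 ∧ b = n ^ 2 := by
  have of_pos {x y : ℤ} (hx : 0 < x) (hxy : x = y ^ 2 ∨ x = -y ^ 2) : x = y ^ 2 :=
    hxy.resolve_right (by nlinarith [sq_nonneg y])
  obtain ⟨m, hm⟩ := Int.sq_of_isCoprime hab h
  obtain ⟨n, hn⟩ := Int.sq_of_isCoprime hab.symm (by rw [mul_comm, h])
  exact ⟨m, n, of_pos ha hm, of_pos hb hn⟩

theorem odd_even_of_sq_sub_mul_sq_eq_one {d x y : ℤ} (hd : d % 4 = 1)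
    (h : x ^ 2 - d * y ^ 2 = 1) : Odd x ∧ Even y := by
  have h4 : x ^ 2 % 4 = (1 + y ^ 2) % 4 := by
    rw [show x ^ 2 = 1 + d * y ^ 2 by linear_combination h, Int.add_emod, Int.mul_emod, hd]
    simp [Int.add_emod]
  rcases Int.even_or_odd' x with ⟨m, rfl | rfl⟩ <;>
    rcases Int.even_or_odd' y with ⟨n, rfl | rfl⟩ <;>
    ring_nf at h4 <;> first | omega | exact ⟨⟨m, rfl⟩, ⟨n, by ring⟩⟩

/-- In the fundamental solution of `x² - p y² = 1` write `x = 2X + 1` and `y = 2Y`, so that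
`X (X + 1) = p Y²`; by minimality `p` divides `X + 1` and not `X`. -/
theorem exists_sq_sub_mul_sq_eq_neg_one {p : ℕ} [hp : Fact p.Prime] (hmod : p % 4 = 1) :
    ∃ x y : ℤ, x ^ 2 - p * y ^ 2 = -1 := by
  have hp0 : (0 : ℤ) < p := by exact_mod_cast hp.out.pos
  have hpp : Prime (p : ℤ) := Nat.prime_iff_prime_int.1 hp.out
  obtain ⟨a, ha⟩ := Pell.IsFundamental.exists_of_not_isSquare hp0 hpp.irreducible.not_isSquare
  have hsol := a.prop
  obtain ⟨⟨X, hX⟩, ⟨Y, hY⟩⟩ := odd_even_of_sq_sub_mul_sq_eq_one (by omega) hsol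
  have hX0 : 0 < X := by
    have := ha.1
    omega
  rw [hX, hY] at hsol
  have hXY : X * (X + 1) = p * Y ^ 2 := by linarith
  have hcop : IsCoprime X (X + 1) := ⟨-1, 1, by ring⟩
  rcases hpp.dvd_or_dvd ⟨_, hXY⟩ with ⟨c, rfl⟩ | ⟨c, hc⟩
  · obtain ⟨f, e, rfl, he⟩ := exists_eq_sq_of_mul_eq_sq (c := Y)
      (pos_of_mul_pos_right hX0 hp0.le) (by omega) hcop.of_mul_left_right
      (mul_left_cancel₀ hp0.ne' (by linear_combination hXY))
    have hlt : |e| < a.x := by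
      rw [hX]
      have := sq_abs e
      nlinarith [abs_nonneg e]
    have hle := ha.x_le_x (a := Pell.Solution₁.mk |e| f (by rw [sq_abs]; linarith))
      (by rw [Pell.Solution₁.x_mk]; nlinarith [sq_abs e, abs_nonneg e])
    exact absurd hle (not_le.2 hlt)
  · obtain ⟨f, e, rfl, rfl⟩ := exists_eq_sq_of_mul_eq_sq (b := c) (c := Y) hX0
      (pos_of_mul_pos_right (hc ▸ by omega) hp0.le) (hc ▸ hcop).of_mul_right_right
      (mul_left_cancel₀ hp0.ne' (by linear_combination hXY - X * hc))
    exact ⟨f, e, by linarith⟩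

end NegativePell

/-! ### Ideals of Dedekind domains -/

section IntegrallyClosed

variable {D : Type*} [CommRing D] [IsDomain D] [IsIntegrallyClosed D]

theorem isSquare_of_sq_eq_mul_sq {a s t : D} (hs : s ≠ 0) (h : a ^ 2 = t * s ^ 2) :
    IsSquare t := by
  obtain ⟨b, rfl⟩ : s ∣ a :=
    (IsIntegrallyClosed.pow_dvd_pow_iff two_ne_zero).1 (h ▸ dvd_mul_left _ _)
  refine ⟨b, mul_right_cancel₀ (pow_ne_zero 2 hs) ?_⟩
  rw [← h]
  ring

theorem dvd_of_sq_eq_mul_mul_add {a b d y : D} (h : y ^ 2 = d * a * y + d ^ 2 * b) : d ∣ y := by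
  rcases eq_or_ne d 0 with rfl | hd
  · simp_all
  have hd' : algebraMap D (FractionRing D) d ≠ 0 := by simpa using hd
  let z := algebraMap D (FractionRing D) y / algebraMap D (FractionRing D) d
  have hz : IsIntegral D z := by
    refine ⟨X ^ 2 - C a * X - C b, by monicity!, ?_⟩
    have h' := congrArg (algebraMap D (FractionRing D)) h
    simp only [map_pow, map_add, map_mul] at h'
    simp only [eval₂_sub, eval₂_pow, eval₂_X, eval₂_mul, eval₂_C, z]
    field_simp
    linear_combination h'
  obtain ⟨x, hx⟩ := IsIntegrallyClosed.isIntegral_iff.1 hz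
  refine ⟨x, FaithfulSMul.algebraMap_injective D (FractionRing D) ?_⟩
  rw [map_mul, hx, mul_div_cancel₀ _ hd']

end IntegrallyClosed

section Dedekind

variable {D : Type*} [CommRing D] [IsDedekindDomain D]

theorem exists_eq_sq_of_sq_eq_sq_mul {A B N : Ideal D} (hB : B ≠ ⊥) (h : A ^ 2 = B ^ 2 * N) :
    ∃ C, A = B * C ∧ N = C ^ 2 := by
  obtain ⟨C, rfl⟩ : B ∣ A :=
    (UniqueFactorizationMonoid.pow_dvd_pow_iff_dvd two_ne_zero).1 (Dvd.intro N h.symm)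
  exact ⟨C, rfl, mul_left_cancel₀ (pow_ne_zero 2 hB) (by rw [← h, mul_pow])⟩

variable [Module.Free ℤ D]

theorem eq_of_dvd_of_absNorm_eq {A B : Ideal D} (h : A ∣ B) (h0 : B.absNorm ≠ 0)
    (hN : A.absNorm = B.absNorm) : A = B := by
  obtain ⟨C, rfl⟩ := h
  rw [map_mul] at hN h0
  have hC : C = ⊤ := Ideal.absNorm_eq_one_iff.1 <|
    Nat.eq_of_mul_eq_mul_left (Nat.pos_of_ne_zero (left_ne_zero_of_mul h0)) (by rw [← hN, mul_one])
  rw [hC, Ideal.mul_top]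

theorem absNorm_map_equiv (e : D ≃+* D) (A : Ideal D) : (A.map e).absNorm = A.absNorm := by
  rw [Ideal.absNorm_apply, Ideal.absNorm_apply, Submodule.cardQuot_apply, Submodule.cardQuot_apply]
  exact (Nat.card_congr (Ideal.quotientEquiv A (A.map e) e rfl).toEquiv).symm

theorem absNorm_eq_of_forall_exists_intCast_sub_mem {q : ℕ} (hq : q.Prime) {Q : Ideal D}
    (hQ : Q ≠ ⊤) (hqQ : (q : D) ∈ Q) (h : ∀ x : D, ∃ n : ℤ, x - n ∈ Q) : Q.absNorm = q := by
  have : Nontrivial (D ⧸ Q) := Ideal.Quotient.nontrivial_iff.2 hQ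
  have : Fact q.Prime := ⟨hq⟩
  have : CharP (D ⧸ Q) q := (CharP.charP_iff_prime_eq_zero hq).2 <| by
    rw [← map_natCast (Ideal.Quotient.mk Q), Ideal.Quotient.eq_zero_iff_mem.2 hqQ]
  rw [Ideal.absNorm_apply, Submodule.cardQuot_apply, ← Nat.card_zmod q]
  refine (Nat.card_congr (Equiv.ofBijective (ZMod.castHom dvd_rfl (D ⧸ Q))
    ⟨RingHom.injective _, fun y ↦ ?_⟩)).symm
  obtain ⟨x, rfl⟩ := Ideal.Quotient.mk_surjective y
  obtain ⟨n, hn⟩ := h x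
  exact ⟨n, by rw [map_intCast, ← map_intCast (Ideal.Quotient.mk Q), Ideal.Quotient.eq.2 hn]⟩

variable [Module.Finite ℤ D]

theorem exists_natCast_dvd {x : D} (hx : x ≠ 0) : ∃ n : ℕ, n ≠ 0 ∧ x ∣ n :=
  ⟨(Ideal.span {x}).absNorm, by simpa [Ideal.absNorm_eq_zero_iff] using hx,
    Ideal.mem_span_singleton.1 (Ideal.absNorm_mem _)⟩

theorem map_ne_zero_of_charZero {F : Type*} [Ring F] [CharZero F] (f : D →+* F) {x : D}
    (hx : x ≠ 0) : f x ≠ 0 := by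
  obtain ⟨n, hn, y, hy⟩ := exists_natCast_dvd hx
  intro h
  have h' := congrArg f hy
  rw [map_natCast, map_mul, h, zero_mul] at h'
  exact hn (by exact_mod_cast h')

end Dedekind

section ClassGroup

variable {D : Type*} [CommRing D] [IsDedekindDomain D]

theorem exists_eq_span_of_mk0_eq_one {A : nonZeroDivisors (Ideal D)}
    (h : ClassGroup.mk0 A = 1) : ∃ x : D, x ≠ 0 ∧ (A : Ideal D) = Ideal.span {x} := by
  obtain ⟨x, hx⟩ := (ClassGroup.mk0_eq_one_iff A.2).1 h
  refine ⟨x, ?_, hx⟩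
  rintro rfl
  exact nonZeroDivisors.coe_ne_zero A (hx.trans (by simp))

theorem mk0_eq_one_of_eq_span {A : nonZeroDivisors (Ideal D)} {x : D}
    (h : (A : Ideal D) = Ideal.span {x}) : ClassGroup.mk0 A = 1 :=
  (ClassGroup.mk0_eq_one_iff A.2).2 ⟨x, h⟩

theorem exists_pow_card_eq_span {A : Ideal D} (hA : A ≠ ⊥) :
    ∃ x : D, x ≠ 0 ∧ A ^ Nat.card (ClassGroup D) = Ideal.span {x} := by
  refine exists_eq_span_of_mk0_eq_one (A := ⟨A, mem_nonZeroDivisors_of_ne_zero hA⟩ ^ _) ?_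
  rw [map_pow, pow_card_eq_one']

variable {M : Type*} [Monoid M] (f : Ideal D →* M) (hf : ∀ x : D, x ≠ 0 → f (Ideal.span {x}) = 1)

include hf in
theorem map_eq_map_of_mk0_eq_mk0 {A B : nonZeroDivisors (Ideal D)}
    (h : ClassGroup.mk0 A = ClassGroup.mk0 B) : f A = f B := by
  obtain ⟨x, y, hx, hy, hxy⟩ := ClassGroup.mk0_eq_mk0_iff.1 h
  simpa [hf x hx, hf y hy] using congrArg f hxy

/-- The homomorphism on the class group induced by a homomorphism on ideals which is trivial on
nonzero principal ideals. -/
noncomputable def classGroupLift : ClassGroup D →* M where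
  toFun c := f (ClassGroup.mk0_surjective c).choose
  map_one' := by
    rw [← map_one f]
    refine map_eq_map_of_mk0_eq_mk0 f hf (B := 1) ?_
    rw [(ClassGroup.mk0_surjective 1).choose_spec, map_one]
  map_mul' c d := by
    rw [← map_mul, ← Submonoid.coe_mul]
    refine map_eq_map_of_mk0_eq_mk0 f hf ?_
    simp only [map_mul, (ClassGroup.mk0_surjective _).choose_spec]

theorem classGroupLift_mk0 (A : nonZeroDivisors (Ideal D)) :
    classGroupLift f hf (ClassGroup.mk0 A) = f A :=
  map_eq_map_of_mk0_eq_mk0 f hf (ClassGroup.mk0_surjective _).choose_spec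

end ClassGroup

/-! ### Powers of prime ideals -/

section PrimePowers

theorem exists_mem_pow_and_notMem_pow_succ {D : Type*} [CommRing D] {P : Ideal D} {y : D} {e : ℕ}
    (hy : y ∉ P ^ e) : ∃ f < e, y ∈ P ^ f ∧ y ∉ P ^ (f + 1) := by
  induction e with
  | zero => simp at hy
  | succ e ih =>
    by_cases h : y ∈ P ^ e
    · exact ⟨e, e.lt_succ_self, h, hy⟩
    · obtain ⟨f, hf, hyf⟩ := ih h
      exact ⟨f, hf.trans e.lt_succ_self, hyf⟩

variable {D : Type*} [CommRing D] [IsDedekindDomain D]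

theorem map_eq_one_of_forall_exact_pow {M : Type*} [CommMonoid M] (f : Ideal D →* M) {I : Ideal D}
    (hI : I ≠ ⊥)
    (h : ∀ (P : Ideal D) (e : ℕ), P.IsPrime → P ∣ I → P ^ e ∣ I → ¬ P ^ (e + 1) ∣ I → f P ^ e = 1) :
    f I = 1 := by
  classical
  rw [← Ideal.prod_normalizedFactors_eq_self hI, map_multiset_prod, Finset.prod_multiset_map_count]
  refine Finset.prod_eq_one fun P hP ↦ ?_
  rw [Multiset.mem_toFinset] at hP
  have hPp := UniqueFactorizationMonoid.prime_of_normalized_factor P hP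
  have hcount :=
    UniqueFactorizationMonoid.emultiplicity_eq_count_normalizedFactors hPp.irreducible hI
  rw [normalize_eq, emultiplicity_eq_coe] at hcount
  exact h P _ (Ideal.isPrime_of_prime hPp)
    (UniqueFactorizationMonoid.dvd_of_mem_normalizedFactors hP) hcount.1 hcount.2

theorem exists_eq_sq_of_mul_eq_sq_of_isCoprime {x y a : D} (hxy : IsCoprime x y)
    (h : x * y = a ^ 2) : ∃ E : Ideal D, Ideal.span {x} = E ^ 2 :=
  exists_eq_pow_of_mul_eq_pow_of_coprime ((Ideal.isCoprime_span_singleton_iff x y).2 hxy) (by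
    rw [Ideal.span_singleton_mul_span_singleton, h, Ideal.span_singleton_pow])

theorem pow_succ_dvd_sq_of_odd {P A : Ideal D} (hP : Prime P) {e : ℕ} (he : Odd e)
    (h : P ^ e ∣ A ^ 2) : P ^ (e + 1) ∣ A ^ 2 := by
  obtain ⟨k, rfl⟩ := he
  obtain ⟨C, rfl⟩ : P ^ k ∣ A := by
    refine (UniqueFactorizationMonoid.pow_dvd_pow_iff_dvd two_ne_zero).1 ?_
    rw [← pow_mul, mul_comm k]
    exact (pow_dvd_pow _ (Nat.le_succ _)).trans h
  rw [mul_pow, ← pow_mul, mul_comm k, pow_succ] at h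
  have hC := hP.dvd_of_dvd_pow ((mul_dvd_mul_iff_left (pow_ne_zero _ hP.ne_zero)).1 h)
  rw [show 2 * k + 1 + 1 = (k + 1) * 2 by ring, pow_mul, pow_succ P]
  exact pow_dvd_pow_of_dvd (mul_dvd_mul_left _ hC) 2

theorem sq_notMem_pow {P : Ideal D} (hP : Prime P) {y : D} {f : ℕ} (hy : y ∈ P ^ f)
    (hy' : y ∉ P ^ (f + 1)) : y ^ 2 ∉ P ^ (2 * f + 1) := by
  rw [← Ideal.dvd_span_singleton] at hy hy' ⊢
  obtain ⟨C, hC⟩ := hy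
  rw [← Ideal.span_singleton_pow, hC, mul_pow, ← pow_mul, mul_comm f, pow_succ,
    mul_dvd_mul_iff_left (pow_ne_zero _ hP.ne_zero)]
  rw [hC, pow_succ, mul_dvd_mul_iff_left (pow_ne_zero _ hP.ne_zero)] at hy'
  exact fun h ↦ hy' (hP.dvd_of_dvd_pow h)

theorem mem_pow_of_sq_mem_pow {P : Ideal D} {b : D} {f : ℕ} (h : b ^ 2 ∈ P ^ (2 * f)) :
    b ∈ P ^ f := by
  rw [← Ideal.dvd_span_singleton] at h ⊢
  rwa [← Ideal.span_singleton_pow, mul_comm, pow_mul,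
    UniqueFactorizationMonoid.pow_dvd_pow_iff_dvd two_ne_zero] at h

/-- At a prime `P` where `y` has smaller order than `x`, dividing the equation by `y ^ 2` and
reducing modulo `P` turns it into `-1 = c * t ^ 2`. -/
theorem exists_one_add_mul_sq_mem {P : Ideal D} (hP : Prime P) {x y b c d : D} {e : ℕ}
    (hx : x ∈ P ^ e) (hy : y ∉ P ^ e) (hc : c ∉ P) (h : d * x ^ 2 - y ^ 2 = c * b ^ 2) :
    ∃ t : D, 1 + c * t ^ 2 ∈ P := by
  have : P.IsPrime := Ideal.isPrime_of_prime hP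
  obtain ⟨f, hfe, hyf, hyf'⟩ := exists_mem_pow_and_notMem_pow_succ hy
  have hsq {k m n : ℕ} {z : D} (hz : z ∈ P ^ k) (hn : k * m = n) : z ^ m ∈ P ^ n := by
    rw [← hn, pow_mul]
    exact Ideal.pow_mem_pow hz m
  have hx2 : d * x ^ 2 ∈ P ^ (2 * f + 1) :=
    Ideal.mul_mem_left _ _
      (Ideal.pow_le_pow_right (by omega : 2 * f + 1 ≤ e * 2) (hsq hx rfl))
  have hb2 : c * b ^ 2 ∈ P ^ (2 * f) :=
    h ▸ Ideal.sub_mem _ (Ideal.pow_le_pow_right (Nat.le_succ _) hx2) (hsq hyf (mul_comm f 2))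
  have hb : b ∈ P ^ f :=
    mem_pow_of_sq_mem_pow ((Ideal.IsPrime.mul_mem_pow P hb2).resolve_left hc)
  obtain ⟨t, z, hz, rfl⟩ := Ideal.exists_mul_add_mem_pow_succ hP.ne_zero y b hyf hyf' hb
  refine ⟨t, Ideal.mem_prime_of_mul_mem_pow hP.ne_zero (sq_notMem_pow hP hyf hyf') ?_⟩
  have hyz : y * z ∈ P ^ (2 * f + 1) := by
    rw [show 2 * f + 1 = f + (f + 1) by ring, pow_add]
    exact Ideal.mul_mem_mul hyf hz
  have hz2 : z ^ 2 ∈ P ^ (2 * f + 1) :=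
    Ideal.pow_le_pow_right (by omega : 2 * f + 1 ≤ (f + 1) * 2) (hsq hz rfl)
  rw [show y ^ 2 * (1 + c * t ^ 2) = d * x ^ 2 - c * (2 * t * (y * z) + z ^ 2) by
    linear_combination -h]
  exact Ideal.sub_mem _ hx2 (Ideal.mul_mem_left _ _
    (Ideal.add_mem _ (Ideal.mul_mem_left _ _ hyz) hz2))

theorem pow_dvd_of_pow_dvd_map_of_not_sq_dvd_map {B : Type*} [CommRing B] [IsDedekindDomain B]
    [Algebra D B] {P : Ideal D} {Q : Ideal B} [P.IsMaximal] (hQ : Prime Q)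
    (hQP : Q ∣ P.map (algebraMap D B)) (hunr : ¬ Q ^ 2 ∣ P.map (algebraMap D B)) {n : ℕ}
    {I : Ideal D} (h : Q ^ n ∣ I.map (algebraMap D B)) : P ^ n ∣ I := by
  have : Q.IsPrime := Ideal.isPrime_of_prime hQ
  have hcomap : P = Q.comap (algebraMap D B) :=
    Ideal.IsMaximal.eq_of_le ‹_› (Ideal.IsPrime.ne_top inferInstance)
      (Ideal.map_le_iff_le_comap.1 (Ideal.dvd_iff_le.1 hQP))
  obtain ⟨E, hE⟩ := hQP
  have hQE : ¬ Q ∣ E := fun hQE ↦ hunr (hE ▸ sq Q ▸ mul_dvd_mul_left Q hQE)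
  induction n with
  | zero => simp
  | succ n ih =>
    obtain ⟨C, rfl⟩ := ih ((pow_dvd_pow Q n.le_succ).trans h)
    rw [Ideal.map_mul, Ideal.map_pow, hE, mul_pow, mul_assoc, pow_succ,
      mul_dvd_mul_iff_left (pow_ne_zero _ hQ.ne_zero)] at h
    have hQC := (hQ.dvd_or_dvd h).resolve_left (fun hEn ↦ hQE (hQ.dvd_of_dvd_pow hEn))
    rw [pow_succ]
    refine mul_dvd_mul_left _ (Ideal.dvd_iff_le.2 ?_)
    rw [hcomap]
    exact Ideal.map_le_iff_le_comap.1 (Ideal.dvd_iff_le.1 hQC)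

end PrimePowers

/-! ### Involutions of quadratic extensions -/

theorem absNorm_span_eq_natAbs_intNorm {D : Type*} [CommRing D] [IsDedekindDomain D]
    [Module.Free ℤ D] [Module.Finite ℤ D] (x : D) :
    (Ideal.span {x}).absNorm = (Algebra.intNorm ℤ D x).natAbs := by
  rw [Ideal.absNorm_span_singleton, Algebra.intNorm_eq_norm]

theorem absNorm_span_intNorm (A : Type*) {B : Type*} [CommRing A] [IsDedekindDomain A]
    [Module.Free ℤ A] [CharZero A] [CommRing B] [IsDedekindDomain B] [Module.Free ℤ B]
    [Module.Finite ℤ B] [Algebra A B] [Module.Finite A B] [Module.IsTorsionFree A B] (x : B) :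
    (Ideal.span {Algebra.intNorm A B x}).absNorm = (Ideal.span {x}).absNorm := by
  rw [← Ideal.relNorm_singleton, Ideal.absNorm_relNorm]

theorem map_algebraMap_ne_bot {A B : Type*} [CommRing A] [IsDomain A] [CommRing B] [IsDomain B]
    [Algebra A B] [Module.IsTorsionFree A B] {I : Ideal A} (hI : I ≠ ⊥) :
    I.map (algebraMap A B) ≠ ⊥ := by
  rwa [Ne, Ideal.map_eq_bot_iff_of_injective (FaithfulSMul.algebraMap_injective A B)]

/-- The nontrivial automorphism `σ` of a quadratic extension `B / A` of Dedekind domains: an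
involution with fixed ring `A` for which `x * σ x` is the norm of `x`. -/
structure IsQuadraticInvolution {A B : Type*} [CommRing A] [IsDedekindDomain A] [CommRing B]
    [IsDedekindDomain B] [Algebra A B] [Module.Finite A B] [Module.IsTorsionFree A B]
    (σ : B ≃ₐ[A] B) : Prop where
  apply_apply : ∀ x, σ (σ x) = x
  exists_algebraMap_eq : ∀ x, σ x = x → ∃ a, algebraMap A B a = x
  finrank_eq_two : Module.finrank A B = 2
  algebraMap_intNorm : ∀ x, algebraMap A B (Algebra.intNorm A B x) = x * σ x

namespace IsQuadraticInvolution

variable {A B : Type*} [CommRing A] [IsDedekindDomain A] [CommRing B] [IsDedekindDomain B]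
  [Algebra A B] [Module.Finite A B] [Module.IsTorsionFree A B] {σ : B ≃ₐ[A] B}
  (hσ : IsQuadraticInvolution σ)

include hσ

theorem exists_algebraMap_eq_add (x : B) : ∃ a, algebraMap A B a = x + σ x :=
  hσ.exists_algebraMap_eq _ (by rw [map_add, hσ.apply_apply, add_comm])

theorem exists_algebraMap_eq_sub_mul {r : B} (hr : σ r = -r) (x : B) :
    ∃ a, algebraMap A B a = (x - σ x) * r :=
  hσ.exists_algebraMap_eq _ (by rw [map_mul, map_sub, hσ.apply_apply, hr]; ring)

theorem intNorm_eq_of_algebraMap_eq {a : A} {x : B} (h : algebraMap A B a = x * σ x) :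
    Algebra.intNorm A B x = a :=
  FaithfulSMul.algebraMap_injective A B ((hσ.algebraMap_intNorm x).trans h.symm)

theorem intNorm_algebraMap (a : A) : Algebra.intNorm A B (algebraMap A B a) = a ^ 2 :=
  hσ.intNorm_eq_of_algebraMap_eq (by rw [σ.commutes, map_pow, sq])

theorem dvd_of_algebraMap_dvd {a b : A} (h : algebraMap A B a ∣ algebraMap A B b) : a ∣ b := by
  obtain ⟨x, hx⟩ := h
  rcases eq_or_ne a 0 with rfl | ha
  · simp_all
  have ha' : algebraMap A B a ≠ 0 := by simpa using ha
  obtain ⟨c, rfl⟩ := hσ.exists_algebraMap_eq x <| mul_left_cancel₀ ha' <| by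
    rw [← hx, ← σ.commutes a, ← map_mul, ← hx, σ.commutes]
  exact ⟨c, FaithfulSMul.algebraMap_injective A B (by rw [hx, map_mul])⟩

/-- For `m = 1` this is the explicit form of Hilbert's Theorem 90. -/
theorem exists_add_algebraMap_sq_eq {x : B} {m : A} (hm : Algebra.intNorm A B x = m ^ 2)
    (hx : x + algebraMap A B m ≠ 0) :
    ∃ a, a ≠ 0 ∧ (x + algebraMap A B m) ^ 2 = x * algebraMap A B a := by
  obtain ⟨t, ht⟩ := hσ.exists_algebraMap_eq_add x
  have hN := hσ.algebraMap_intNorm x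
  rw [hm, map_pow] at hN
  have hsq : (x + algebraMap A B m) ^ 2 = x * algebraMap A B (t + 2 * m) := by
    rw [map_add, map_mul, map_ofNat, ht]
    linear_combination hN
  refine ⟨t + 2 * m, ?_, hsq⟩
  intro h
  rw [h, map_zero, mul_zero] at hsq
  exact hx (pow_eq_zero_iff two_ne_zero |>.1 hsq)

theorem isUnit_intNorm_iff {x : B} : IsUnit (Algebra.intNorm A B x) ↔ IsUnit x :=
  ⟨fun h ↦ isUnit_of_mul_isUnit_left (hσ.algebraMap_intNorm x ▸ h.map (algebraMap A B)),
    fun h ↦ h.map _⟩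

theorem dvd_of_map_dvd_map {I J : Ideal A}
    (h : I.map (algebraMap A B) ∣ J.map (algebraMap A B)) : I ∣ J := by
  refine (UniqueFactorizationMonoid.pow_dvd_pow_iff_dvd two_ne_zero).1 ?_
  rw [← hσ.finrank_eq_two, ← Ideal.relNorm_algebraMap B I, ← Ideal.relNorm_algebraMap B J]
  exact map_dvd _ h

theorem map_injective : Function.Injective (Ideal.map (algebraMap A B)) := fun _ _ h ↦
  dvd_antisymm (hσ.dvd_of_map_dvd_map h.dvd) (hσ.dvd_of_map_dvd_map h.symm.dvd)

section Ideal

variable [Module.Free ℤ A] [Module.Finite ℤ A] [Module.Free ℤ B] [Module.Finite ℤ B]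

theorem absNorm_map_algebraMap (I : Ideal A) :
    (I.map (algebraMap A B)).absNorm = I.absNorm ^ 2 := by
  rw [Ideal.absNorm_algebraMap, hσ.finrank_eq_two]

section Ramified

variable {P : Ideal A} {Q : Ideal B} [P.IsPrime] [Q.IsPrime] (hP : P ≠ ⊥)
  (hQ : Q ^ 2 ∣ P.map (algebraMap A B))

include hP hQ

theorem comap_eq_and_absNorm_eq_of_sq_dvd_map :
    Q.comap (algebraMap A B) = P ∧ Q.absNorm = P.absNorm := by
  have hPmap : P.map (algebraMap A B) ≠ ⊥ := map_algebraMap_ne_bot hP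
  have hQ0 : Q ≠ ⊥ := by
    rintro rfl
    exact hPmap (zero_dvd_iff.1 (by simpa using hQ))
  have hcomap : P = Q.comap (algebraMap A B) :=
    (Ideal.IsPrime.isMaximal ‹_› hP).eq_of_le (Ideal.comap_ne_top _ Ideal.IsPrime.ne_top')
      (Ideal.map_le_iff_le_comap.1 ((Ideal.le_of_dvd hQ).trans (Ideal.pow_le_self two_ne_zero)))
  have : Finite (B ⧸ Q) := Ideal.finiteQuotientOfFreeOfNeBot Q hQ0
  refine ⟨hcomap.symm, le_antisymm ?_ ?_⟩
  · have h := map_dvd Ideal.absNorm hQ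
    rw [hσ.absNorm_map_algebraMap, map_pow] at h
    exact (Nat.pow_le_pow_iff_left two_ne_zero).1 <|
      Nat.le_of_dvd (pow_pos (Nat.pos_of_ne_zero (by rwa [Ne, Ideal.absNorm_eq_zero_iff])) 2) h
  · simp only [Ideal.absNorm_apply, Submodule.cardQuot_apply]
    exact Nat.card_le_card_of_injective (Ideal.quotientMap Q (algebraMap A B) hcomap.le)
      (Ideal.quotientMap_injective' hcomap.ge)

theorem map_eq_sq_of_sq_dvd_map : P.map (algebraMap A B) = Q ^ 2 := by
  refine (eq_of_dvd_of_absNorm_eq hQ ?_ ?_).symm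
  · rwa [hσ.absNorm_map_algebraMap, pow_ne_zero_iff two_ne_zero, Ne, Ideal.absNorm_eq_zero_iff]
  · rw [hσ.absNorm_map_algebraMap, map_pow, (hσ.comap_eq_and_absNorm_eq_of_sq_dvd_map hP hQ).2]

theorem map_eq_self_of_sq_dvd_map : Q.map σ = Q := by
  refine pow_left_injective two_ne_zero ?_
  beta_reduce
  rw [← Ideal.map_pow, ← hσ.map_eq_sq_of_sq_dvd_map hP hQ]
  exact (Ideal.map_map (algebraMap A B) (σ : B →+* B)).trans
    (congrArg (P.map ·) (RingHom.ext σ.commutes))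

theorem exists_algebraMap_sub_mem_of_sq_dvd_map (z : B) : ∃ a, algebraMap A B a - z ∈ Q := by
  obtain ⟨hcomap, hcard⟩ := hσ.comap_eq_and_absNorm_eq_of_sq_dvd_map hP hQ
  have : Finite (A ⧸ P) := Ideal.finiteQuotientOfFreeOfNeBot P hP
  have : Finite (B ⧸ Q) := Ideal.finiteQuotientOfFreeOfNeBot Q <| by
    rintro rfl
    exact hP (by rw [← hcomap, Ideal.comap_bot_of_injective _
      (FaithfulSMul.algebraMap_injective A B)])
  have hsurj := ((Nat.bijective_iff_injective_and_card
    (Ideal.quotientMap Q (algebraMap A B) hcomap.ge)).2 ⟨Ideal.quotientMap_injective' hcomap.le, by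
      simpa only [Ideal.absNorm_apply, Submodule.cardQuot_apply] using hcard.symm⟩).2
  obtain ⟨a, ha⟩ := hsurj (Ideal.Quotient.mk Q z)
  obtain ⟨a, rfl⟩ := Ideal.Quotient.mk_surjective a
  exact ⟨a, Ideal.Quotient.eq.1 ha⟩

/-- A ramified prime has trivial residue extension, so `σ` acts trivially modulo it. -/
theorem sub_apply_mem_of_sq_dvd_map (z : B) : z - σ z ∈ Q := by
  obtain ⟨a, ha⟩ := hσ.exists_algebraMap_sub_mem_of_sq_dvd_map hP hQ z
  have hσa := Ideal.mem_map_of_mem σ ha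
  rw [hσ.map_eq_self_of_sq_dvd_map hP hQ, map_sub, σ.commutes] at hσa
  simpa using Q.sub_mem hσa ha

end Ramified

theorem exists_isPrime_map_eq_sq_of_mul_map_eq_sq {P N : Ideal A} {c : Ideal B} (hPp : P.IsPrime)
    (hP : P ≠ ⊥) (hPN : ¬ P ∣ N) (hc : P.map (algebraMap A B) * N.map (algebraMap A B) = c ^ 2) :
    ∃ Q E : Ideal B, Q.IsPrime ∧ P.map (algebraMap A B) = Q ^ 2 ∧ c = Q * E ∧
      N.map (algebraMap A B) = E ^ 2 := by
  have hmax : P.IsMaximal := hPp.isMaximal hP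
  obtain ⟨Q, hQmax, hQover⟩ := Ideal.exists_maximal_ideal_liesOver_of_isIntegral (S := B) P
  have hQp : Q.IsPrime := hQmax.isPrime
  have hdvd {I : Ideal A} : Q ∣ I.map (algebraMap A B) ↔ P ∣ I := by
    rw [Ideal.dvd_iff_le, Ideal.dvd_iff_le, Ideal.map_le_iff_le_comap, hQover.over]
  have hQ : Q ∣ P.map (algebraMap A B) := hdvd.2 dvd_rfl
  have hQ' : Prime Q :=
    Ideal.prime_of_isPrime (ne_zero_of_dvd_ne_zero (map_algebraMap_ne_bot hP) hQ) hQp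
  have hQN : ¬ Q ∣ N.map (algebraMap A B) := hdvd.not.2 hPN
  have hQc : Q ∣ c := hQ'.dvd_of_dvd_pow (hc ▸ hQ.mul_right _)
  have hQP := hσ.map_eq_sq_of_sq_dvd_map hP <|
    hQ'.pow_dvd_of_dvd_mul_right 2 hQN (hc ▸ pow_dvd_pow_of_dvd hQc 2)
  obtain ⟨E, hE, hNE⟩ := exists_eq_sq_of_sq_eq_sq_mul hQ'.ne_zero (hQP ▸ hc.symm)
  exact ⟨Q, E, hQp, hQP, hE, hNE⟩

/-- An ideal whose square is extended from `A` is a product of extended ideals and ramified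
primes. -/
theorem induction_of_map_eq_sq {motive : Ideal B → Prop} (one : motive 1)
    (map_mul : ∀ (C : Ideal A) (c : Ideal B), C ≠ ⊥ → motive c →
      motive (C.map (algebraMap A B) * c))
    (ramified_mul : ∀ (P : Ideal A) (Q c : Ideal B), P.IsPrime → Q.IsPrime → P ≠ ⊥ →
      P.map (algebraMap A B) = Q ^ 2 → motive c → motive (Q * c))
    {N : Ideal A} (hN : N ≠ ⊥) {c : Ideal B} (hc : N.map (algebraMap A B) = c ^ 2) :
    motive c := by
  induction N using (wellFounded_dvdNotUnit (α := Ideal A)).induction generalizing c with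
  | _ N ih =>
  by_cases hN1 : N = ⊤
  · rw [hN1, Ideal.map_top, ← Ideal.one_eq_top] at hc
    rwa [pow_eq_one_iff_left two_ne_zero |>.1 hc.symm]
  obtain ⟨P, hPmax, hNP⟩ := Ideal.exists_le_maximal N hN1
  obtain ⟨N, rfl⟩ := Ideal.dvd_iff_le.2 hNP
  have hPp : P.IsPrime := hPmax.isPrime
  have hP : P ≠ ⊥ := left_ne_zero_of_mul hN
  have hN' : N ≠ ⊥ := right_ne_zero_of_mul hN
  have hPu : ¬ IsUnit P := (Ideal.prime_of_isPrime hP hPp).not_isUnit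
  by_cases hPN : P ∣ N
  · obtain ⟨M, rfl⟩ := hPN
    rw [← mul_assoc, Ideal.map_mul, Ideal.map_mul, ← sq] at hc
    obtain ⟨E, rfl, hE⟩ := exists_eq_sq_of_sq_eq_sq_mul (map_algebraMap_ne_bot hP) hc.symm
    have hM : M ≠ ⊥ := right_ne_zero_of_mul hN'
    exact map_mul P E hP (ih M ⟨hM, P * P, fun h ↦ hPu (isUnit_of_mul_isUnit_left h), by
      rw [mul_comm M, mul_assoc]⟩
      hM hE)
  · rw [Ideal.map_mul] at hc
    obtain ⟨Q, E, hQ, hPQ, rfl, hE⟩ :=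
      hσ.exists_isPrime_map_eq_sq_of_mul_map_eq_sq hPp hP hPN hc
    exact ramified_mul P Q E hPp hQ hP hPQ (ih N ⟨hN', P, hPu, mul_comm _ _⟩ hN' hE)

variable [CharZero A]

theorem map_relNorm (I : Ideal B) : (Ideal.relNorm A I).map (algebraMap A B) = I * I.map σ := by
  rcases eq_or_ne I ⊥ with rfl | hI
  · simp
  have hN : (I * I.map σ).absNorm = ((Ideal.relNorm A I).map (algebraMap A B)).absNorm := by
    rw [hσ.absNorm_map_algebraMap, Ideal.absNorm_relNorm, map_mul, sq]
    congr 1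
    exact absNorm_map_equiv σ.toRingEquiv I
  refine (eq_of_dvd_of_absNorm_eq (Ideal.dvd_iff_le.2 ?_) ?_ hN).symm
  · rw [Ideal.map_relNorm, Ideal.span_le]
    rintro _ ⟨x, hx, rfl⟩
    simpa [hσ.algebraMap_intNorm] using Ideal.mul_mem_mul hx (Ideal.mem_map_of_mem _ hx)
  · rwa [hσ.absNorm_map_algebraMap, pow_ne_zero_iff two_ne_zero, Ideal.absNorm_relNorm, Ne,
      Ideal.absNorm_eq_zero_iff]

end Ideal

end IsQuadraticInvolution

/-! ### The ring of integers of a real quadratic field of prime discriminant -/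

/-- The ring of integers `R` of `ℚ(√p)` for a prime `p ≡ 1 (mod 4)`, presented by a square root `w`
of `p`, the conjugation `τ` and the real embedding `φ` with `φ w > 0`. -/
structure RealQuadraticRing (p : ℕ) (R : Type*) [CommRing R] [IsDedekindDomain R]
    [Module.Finite ℤ R] [CharZero R] where
  mod_four : p % 4 = 1
  w : R
  w_sq : w ^ 2 = p
  τ : R ≃ₐ[ℤ] R
  isQuadraticInvolution_τ : IsQuadraticInvolution τ
  τ_w : τ w = -w
  φ : R →+* ℝ
  φ_w_pos : 0 < φ w

namespace RealQuadraticRing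

variable {p : ℕ} {R : Type*} [CommRing R] [IsDedekindDomain R] [Module.Finite ℤ R] [CharZero R]
  (T : RealQuadraticRing p R)

/-- The real embedding sending `w` to `-√p`. -/
noncomputable def ψ : R →+* ℝ := T.φ.comp T.τ

theorem φ_τ (x : R) : T.φ (T.τ x) = T.ψ x := rfl

theorem ψ_w_neg : T.ψ T.w < 0 := by
  simpa [← φ_τ, T.τ_w] using T.φ_w_pos

theorem not_isSquare_w : ¬ IsSquare T.w := fun h ↦ T.ψ_w_neg.not_ge (h.map T.ψ).nonneg

theorem w_ne_zero : T.w ≠ 0 := by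
  intro h
  simpa [h] using T.φ_w_pos

theorem intCast_intNorm (x : R) : (Algebra.intNorm ℤ R x : R) = x * T.τ x := by
  rw [← T.isQuadraticInvolution_τ.algebraMap_intNorm, eq_intCast]

theorem intNorm_eq_of_intCast_eq {x : R} {n : ℤ} (h : (n : R) = x * T.τ x) :
    Algebra.intNorm ℤ R x = n :=
  T.isQuadraticInvolution_τ.intNorm_eq_of_algebraMap_eq (by rw [eq_intCast, h])

theorem φ_mul_ψ (x : R) : T.φ x * T.ψ x = Algebra.intNorm ℤ R x := by
  rw [← φ_τ, ← map_mul, ← T.intCast_intNorm, map_intCast]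

theorem intNorm_w : Algebra.intNorm ℤ R T.w = -p :=
  T.intNorm_eq_of_intCast_eq (by simp [T.τ_w, ← T.w_sq, sq])

include T in
theorem intCast_dvd_intCast {m n : ℤ} : (m : R) ∣ n ↔ m ∣ n :=
  ⟨fun h ↦ T.isQuadraticInvolution_τ.dvd_of_algebraMap_dvd (by simpa using h),
    fun h ↦ by exact_mod_cast map_dvd (Int.castRingHom R) h⟩

include T in
theorem isUnit_iff_intNorm {x : R} :
    IsUnit x ↔ Algebra.intNorm ℤ R x = 1 ∨ Algebra.intNorm ℤ R x = -1 := by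
  rw [← T.isQuadraticInvolution_τ.isUnit_intNorm_iff, Int.isUnit_iff]

theorem exists_two_mul_eq_one_add_w : ∃ ω : R, 2 * ω = 1 + T.w := by
  obtain ⟨m, hm⟩ : ∃ m, p = 4 * m + 1 := ⟨p / 4, by have := T.mod_four; omega⟩
  obtain ⟨ω, hω⟩ := dvd_of_sq_eq_mul_mul_add (d := 2) (a := 1) (b := (m : R)) (y := 1 + T.w) (by
    have hmR : (p : R) = 4 * m + 1 := by rw [hm]; push_cast; rfl
    linear_combination T.w_sq + hmR)
  exact ⟨ω, hω.symm⟩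

/-- The integral generator `(1 + √p) / 2`. -/
noncomputable def ω : R := T.exists_two_mul_eq_one_add_w.choose

theorem two_mul_ω : 2 * T.ω = 1 + T.w := T.exists_two_mul_eq_one_add_w.choose_spec

theorem ω_sub_τ_ω : T.ω - T.τ T.ω = T.w := by
  have h := congrArg T.τ T.two_mul_ω
  rw [map_mul, map_add, map_ofNat, map_one, T.τ_w] at h
  refine mul_left_cancel₀ (two_ne_zero (α := R)) ?_
  linear_combination T.two_mul_ω - h

theorem exists_sub_τ_eq_w_mul [Fact p.Prime] (x : R) : ∃ t : ℤ, x - T.τ x = T.w * t := by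
  have hτ := T.isQuadraticInvolution_τ
  obtain ⟨n, hn⟩ := hτ.exists_algebraMap_eq_sub_mul T.τ_w x
  obtain ⟨d, hd⟩ := hτ.exists_algebraMap_eq ((x - T.τ x) ^ 2) <| by
    rw [map_pow, map_sub, hτ.apply_apply]
    ring
  rw [eq_intCast] at hn hd
  have h : ((n ^ 2 : ℤ) : R) = ((p * d : ℤ) : R) := by
    push_cast
    rw [hn, hd, ← T.w_sq]
    ring
  obtain ⟨t, rfl⟩ := (Nat.prime_iff_prime_int.1 (Fact.out : p.Prime)).dvd_of_dvd_pow
    (Dvd.intro _ (Int.cast_injective h).symm)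
  refine ⟨t, mul_right_cancel₀ T.w_ne_zero ?_⟩
  rw [← hn]
  push_cast
  rw [← T.w_sq]
  ring

theorem exists_eq_add_mul_ω [Fact p.Prime] (x : R) : ∃ a t : ℤ, x = a + t * T.ω := by
  obtain ⟨t, ht⟩ := T.exists_sub_τ_eq_w_mul x
  obtain ⟨a, ha⟩ := T.isQuadraticInvolution_τ.exists_algebraMap_eq (x - t * T.ω) <| by
    rw [map_sub, map_mul, map_intCast]
    linear_combination (t : R) * T.ω_sub_τ_ω - ht
  exact ⟨a, t, by rw [← eq_intCast (algebraMap ℤ R), ha]; ring⟩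

/-- The prime `(2, ω)`, which is the one above `2` that can ramify in `ℚ(⁴√p)`. -/
noncomputable def primeOverTwo : Ideal R := Ideal.span {2, T.ω}

section PrimeOverTwo

variable [Fact p.Prime] {P : Ideal R} (hP : P ≠ ⊤) (h2 : (2 : R) ∈ P) (hω : T.ω ∈ P)

include hP h2 hω

theorem eq_primeOverTwo : P = T.primeOverTwo := by
  have h2' : (2 : R) ∈ T.primeOverTwo := Ideal.subset_span (by simp)
  have hω' : T.ω ∈ T.primeOverTwo := Ideal.subset_span (by simp)
  refine le_antisymm (fun x hx ↦ ?_) (Ideal.span_le.2 (Set.pair_subset h2 hω))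
  obtain ⟨a, t, rfl⟩ := T.exists_eq_add_mul_ω x
  have ha : (a : R) ∈ P := (P.add_mem_iff_left (P.mul_mem_left _ hω)).1 hx
  refine Ideal.add_mem _ ?_ (Ideal.mul_mem_left _ _ hω')
  rcases Int.even_or_odd' a with ⟨k, rfl | rfl⟩
  · push_cast
    exact Ideal.mul_mem_right _ _ h2'
  · push_cast at ha
    exact absurd ((Ideal.eq_top_iff_one P).2 ((P.add_mem_iff_right (P.mul_mem_right _ h2)).1 ha)) hP

theorem absNorm_eq_two [Module.Free ℤ R] : P.absNorm = 2 := by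
  refine absNorm_eq_of_forall_exists_intCast_sub_mem Nat.prime_two hP (by exact_mod_cast h2)
    fun x ↦ ?_
  obtain ⟨a, t, rfl⟩ := T.exists_eq_add_mul_ω x
  exact ⟨a, by simpa using P.mul_mem_left _ hω⟩

end PrimeOverTwo

include T in
theorem exists_intNorm_eq_neg_one [Fact p.Prime] : ∃ e : R, Algebra.intNorm ℤ R e = -1 := by
  obtain ⟨x, y, h⟩ := exists_sq_sub_mul_sq_eq_neg_one T.mod_four
  refine ⟨x + y * T.w, T.intNorm_eq_of_intCast_eq ?_⟩
  rw [← h, map_add, map_mul, map_intCast, map_intCast, T.τ_w]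
  push_cast
  linear_combination (y : R) ^ 2 * T.w_sq

variable [Module.Free ℤ R]

theorem isMaximal_span_w [Fact p.Prime] : (Ideal.span {T.w}).IsMaximal := by
  have hp : (Ideal.span {T.w}).absNorm = p := by
    rw [absNorm_span_eq_natAbs_intNorm, T.intNorm_w, Int.natAbs_neg, Int.natAbs_natCast]
  refine (Ideal.isPrime_of_irreducible_absNorm ?_).isMaximal (by simpa using T.w_ne_zero)
  rw [hp]
  exact (Fact.out : p.Prime)

include T in
theorem exists_eq_span_of_map_eq_sq [Fact p.Prime] {N : Ideal ℤ} (hN : N ≠ ⊥) {c : Ideal R}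
    (hc : N.map (algebraMap ℤ R) = c ^ 2) :
    ∃ (k : ℤ) (i : ℕ), c = Ideal.span {(k : R) * T.w ^ i} := by
  refine T.isQuadraticInvolution_τ.induction_of_map_eq_sq
    (motive := fun c ↦ ∃ (k : ℤ) (i : ℕ), c = Ideal.span {(k : R) * T.w ^ i})
    ⟨1, 0, by simp⟩ ?_ ?_ hN hc
  · rintro C _ - ⟨k, i, rfl⟩
    obtain ⟨m, rfl⟩ := (IsPrincipalIdealRing.principal C).principal
    refine ⟨m * k, i, ?_⟩
    rw [Ideal.submodule_span_eq, Ideal.map_span, Set.image_singleton, eq_intCast,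
      Ideal.span_singleton_mul_span_singleton, Int.cast_mul, mul_assoc]
  · rintro P Q _ hPp hQp hP hPQ ⟨k, i, rfl⟩
    have hw : T.w ∈ Q := T.ω_sub_τ_ω ▸
      T.isQuadraticInvolution_τ.sub_apply_mem_of_sq_dvd_map hP hPQ.symm.dvd T.ω
    have hQ : Q = Ideal.span {T.w} := (T.isMaximal_span_w.eq_of_le hQp.ne_top <| by
      rwa [Ideal.span_singleton_le_iff_mem]).symm
    refine ⟨k, i + 1, ?_⟩
    rw [hQ, Ideal.span_singleton_mul_span_singleton, pow_succ', mul_left_comm]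

include T in
theorem isSquare_natCast_of_span_eq_sq [Fact p.Prime] {n : ℕ} {c : Ideal R}
    (hc : Ideal.span {(n : R)} = c ^ 2) : IsSquare (n : R) := by
  rcases eq_or_ne n 0 with rfl | hn
  · simp
  obtain ⟨k, i, rfl⟩ := T.exists_eq_span_of_map_eq_sq (N := Ideal.span {(n : ℤ)})
    (by simpa using hn) (by simpa [Ideal.map_span] using hc)
  have hsq : ((k ^ 2 * p ^ i : ℤ) : R) = ((k : R) * T.w ^ i) ^ 2 := by
    push_cast
    rw [← T.w_sq]
    ring
  have hn' : Associated (n : ℤ) (k ^ 2 * p ^ i) := by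
    rw [Ideal.span_singleton_pow, ← hsq, Ideal.span_singleton_eq_span_singleton,
      ← Int.cast_natCast] at hc
    exact associated_of_dvd_dvd (T.intCast_dvd_intCast.1 hc.dvd)
      (T.intCast_dvd_intCast.1 hc.symm.dvd)
  refine ⟨(k : R) * T.w ^ i, ?_⟩
  rw [← sq, ← hsq, ← Int.eq_of_associated_of_nonneg hn' (by positivity) (by positivity),
    Int.cast_natCast]

/-- With `s = Tr t + 2 m`, the identity `(t + m) ^ 2 = t * s` shows that `s` generates the square of
an ideal, hence is a square, and so is `t`. -/
theorem isSquare_of_intNorm_eq_sq [Fact p.Prime] {t : R} {m : ℕ} (hm : m ≠ 0) (ht : 0 < T.ψ t)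
    (hN : Algebra.intNorm ℤ R t = m ^ 2) {c : Ideal R} (hc : Ideal.span {t} = c ^ 2) :
    IsSquare t := by
  obtain ⟨n, hn⟩ := T.isQuadraticInvolution_τ.exists_algebraMap_eq_add t
  rw [eq_intCast] at hn
  have ht' : 0 < T.φ t := by
    refine pos_of_mul_pos_left ?_ ht.le
    rw [φ_mul_ψ, hN]
    positivity
  have hn0 : 0 < n := by
    have h : (n : ℝ) = T.φ t + T.ψ t := by rw [← φ_τ, ← map_add, ← hn, map_intCast]
    exact_mod_cast h ▸ add_pos ht' ht
  obtain ⟨s, hs⟩ : ∃ s : ℕ, n + 2 * m = s := ⟨(n + 2 * m).toNat, by omega⟩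
  have hsR : (s : R) = t + T.τ t + 2 * m := by
    rw [← hn]
    exact_mod_cast congrArg (Int.cast : ℤ → R) hs.symm
  have hsq : (t + m) ^ 2 = t * s := by
    have h := T.intCast_intNorm t
    rw [hN] at h
    push_cast at h
    rw [hsR]
    linear_combination h
  have hc0 : c ≠ ⊥ := by
    rintro rfl
    have : t = 0 := by simpa using hc
    simp [this] at ht
  obtain ⟨E, -, hE⟩ := exists_eq_sq_of_sq_eq_sq_mul (A := Ideal.span {t + (m : R)})
    (N := Ideal.span {(s : R)}) hc0
    (by rw [Ideal.span_singleton_pow, hsq, ← hc, Ideal.span_singleton_mul_span_singleton])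
  obtain ⟨a, ha⟩ := T.isSquare_natCast_of_span_eq_sq hE
  refine isSquare_of_sq_eq_mul_sq (a := t + m) (s := a) ?_ (by rw [hsq, ha, sq])
  rintro rfl
  have : s = 0 := by simpa using ha
  omega

theorem isSquare_of_intNorm_eq_one [Fact p.Prime] {u : R} (hu : Algebra.intNorm ℤ R u = 1)
    (hpos : 0 < T.ψ u) : IsSquare u := by
  refine T.isSquare_of_intNorm_eq_sq one_ne_zero hpos (by simpa using hu) (c := 1) ?_
  rw [one_pow, Ideal.one_eq_top, Ideal.span_singleton_eq_top]
  exact T.isUnit_iff_intNorm.2 (.inl hu)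

theorem exists_totally_positive_span_eq [Fact p.Prime] {x : R} (hx : x ≠ 0) :
    ∃ y : R, Ideal.span {y} = Ideal.span {x} ∧ 0 < T.ψ y ∧
      Algebra.intNorm ℤ R y = (Ideal.span {x}).absNorm := by
  obtain ⟨z, hz, hNz⟩ : ∃ z : R, Ideal.span {z} = Ideal.span {x} ∧
      Algebra.intNorm ℤ R z = (Ideal.span {x}).absNorm := by
    rcases Int.natAbs_eq (Algebra.intNorm ℤ R x) with h | h
    · exact ⟨x, rfl, by rw [absNorm_span_eq_natAbs_intNorm, ← h]⟩
    · obtain ⟨e, he⟩ := T.exists_intNorm_eq_neg_one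
      refine ⟨x * e, Ideal.span_singleton_mul_right_unit (T.isUnit_iff_intNorm.2 (.inr he)) _, ?_⟩
      rw [absNorm_span_eq_natAbs_intNorm, map_mul, he]
      omega
  have hz0 : z ≠ 0 := by
    rintro rfl
    exact hx (by simpa using hz.symm)
  rcases (map_ne_zero_of_charZero T.ψ hz0).lt_or_gt with h | h
  · refine ⟨-z, by rw [Ideal.span_singleton_neg, hz], by simpa using h, ?_⟩
    rw [← hNz]
    exact T.intNorm_eq_of_intCast_eq (by rw [map_neg, neg_mul_neg, T.intCast_intNorm])
  · exact ⟨z, hz, h, hNz⟩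

include T in
theorem eq_span_of_sq_eq_span [Fact p.Prime] {A : Ideal R} {x : R} (hx : x ≠ 0)
    (hA : A ^ 2 = Ideal.span {x}) : ∃ y, A = Ideal.span {y} := by
  obtain ⟨t, ht, hpos, hN⟩ := T.exists_totally_positive_span_eq hx
  have hA0 : A.absNorm ≠ 0 := by
    rw [Ne, Ideal.absNorm_eq_zero_iff]
    rintro rfl
    exact hx (by simpa using hA.symm)
  obtain ⟨s, rfl⟩ := T.isSquare_of_intNorm_eq_sq hA0 hpos
    (by rw [hN, ← hA]; simp) (ht.trans hA.symm)
  refine ⟨s, pow_left_injective two_ne_zero ?_⟩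
  beta_reduce
  rw [hA, ← ht, Ideal.span_singleton_pow, sq]

include T in
theorem odd_card_classGroup [Fact p.Prime] [Finite (ClassGroup R)] :
    Odd (Nat.card (ClassGroup R)) := by
  rw [← Nat.not_even_iff_odd, even_iff_two_dvd]
  intro h2
  obtain ⟨c, hc⟩ := exists_prime_orderOf_dvd_card' 2 h2
  obtain ⟨A, rfl⟩ := ClassGroup.mk0_surjective c
  obtain ⟨x, hx, hA⟩ := exists_eq_span_of_mk0_eq_one (A := A ^ 2)
    (by rw [map_pow, ← hc, pow_orderOf_eq_one])
  obtain ⟨y, hy⟩ := T.eq_span_of_sq_eq_span hx (by simpa using hA)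
  rw [mk0_eq_one_of_eq_span hy, orderOf_one] at hc
  omega

end RealQuadraticRing

/-! ### The quartic character of ideals -/

/-- The quartic character of an ideal: the quartic residue symbol modulo `p` of the prime-to-`p`
part of its norm. -/
noncomputable def quarticCharacter (p : ℕ) (D : Type*) [CommRing D] [IsDedekindDomain D]
    [Module.Free ℤ D] : Ideal D →* ZMod p where
  toFun A := (ordCompl[p] A.absNorm : ZMod p) ^ ((p - 1) / 4)
  map_one' := by simp
  map_mul' A B := by rw [map_mul, Nat.ordCompl_mul, Nat.cast_mul, mul_pow]

section QuarticCharacter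

variable {p : ℕ} {D : Type*} [CommRing D] [IsDedekindDomain D] [Module.Free ℤ D]

theorem quarticCharacter_apply (A : Ideal D) :
    quarticCharacter p D A = (ordCompl[p] A.absNorm : ZMod p) ^ ((p - 1) / 4) := rfl

theorem quarticCharacter_of_not_dvd {A : Ideal D} (hA : ¬ p ∣ A.absNorm) :
    quarticCharacter p D A = (A.absNorm : ZMod p) ^ ((p - 1) / 4) := by
  rw [quarticCharacter_apply, Nat.factorization_eq_zero_of_not_dvd hA, pow_zero, Nat.div_one]

theorem quarticCharacter_map_equiv (e : D ≃+* D) (A : Ideal D) :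
    quarticCharacter p D (A.map e) = quarticCharacter p D A := by
  rw [quarticCharacter_apply, quarticCharacter_apply, absNorm_map_equiv]

variable [Fact p.Prime]

theorem quarticCharacter_of_absNorm_eq {A : Ideal D} (hA : A.absNorm = p) :
    quarticCharacter p D A = 1 := by
  have hp : p.Prime := Fact.out
  rw [quarticCharacter_apply, hA, hp.factorization_self, pow_one, Nat.div_self hp.pos, Nat.cast_one,
    one_pow]

theorem pow_four_pow_eq_one (hp : 4 ∣ p - 1) {x : ZMod p} (hx : x ≠ 0) :
    (x ^ 4) ^ ((p - 1) / 4) = 1 := by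
  rw [← pow_mul, Nat.mul_div_cancel' hp, ZMod.pow_card_sub_one_eq_one hx]

theorem quarticCharacter_pow_four (hp : 4 ∣ p - 1) [Module.Finite ℤ D] {A : Ideal D} (hA : A ≠ ⊥) :
    quarticCharacter p D A ^ 4 = 1 := by
  rw [quarticCharacter_apply, ← pow_mul, mul_comm, pow_mul]
  refine pow_four_pow_eq_one hp ?_
  rw [Ne, ZMod.natCast_eq_zero_iff]
  exact Nat.not_dvd_ordCompl Fact.out (by rwa [Ne, Ideal.absNorm_eq_zero_iff])

end QuarticCharacter

/-- The rings of integers `R ⊆ S` of `ℚ(√p) ⊆ ℚ(⁴√p)` for a prime `p ≡ 1 (mod 16)`, presented by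
a square root `r` of `w` and the involution `σ` of `S` over `R`. Since `S` has unit rank `2`, its
units modulo squares are not generated by `-1` and a single unit. -/
structure PureQuarticTower (p : ℕ) (R S : Type*) [CommRing R] [IsDedekindDomain R]
    [Module.Finite ℤ R] [CharZero R] [CommRing S] [IsDedekindDomain S] [Algebra R S]
    [Module.Finite R S] [Module.IsTorsionFree R S] extends RealQuadraticRing p R where
  mod_sixteen : p % 16 = 1
  r : S
  r_sq : r ^ 2 = algebraMap R S w
  σ : S ≃ₐ[R] S
  isQuadraticInvolution_σ : IsQuadraticInvolution σ
  σ_r : σ r = -r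
  closure_sup_range_ne_top : ∀ ε : Sˣ,
    Subgroup.closure {-1, ε} ⊔ (powMonoidHom 2 : Sˣ →* Sˣ).range ≠ ⊤

namespace PureQuarticTower

variable {p : ℕ} {R S : Type*} [CommRing R] [IsDedekindDomain R] [Module.Finite ℤ R] [CharZero R]
  [CommRing S] [IsDedekindDomain S] [Algebra R S] [Module.Finite R S] [Module.IsTorsionFree R S]
  (T : PureQuarticTower p R S)

local notation "ι" => algebraMap R S

theorem r_ne_zero : T.r ≠ 0 := by
  intro h
  have hw := T.r_sq
  rw [h, zero_pow two_ne_zero, eq_comm,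
    map_eq_zero_iff _ (FaithfulSMul.algebraMap_injective R S)] at hw
  exact T.w_ne_zero hw

theorem intNorm_r : Algebra.intNorm R S T.r = -T.w :=
  T.isQuadraticInvolution_σ.intNorm_eq_of_algebraMap_eq (by rw [T.σ_r, map_neg, ← T.r_sq]; ring)

include T in
theorem four_dvd : 4 ∣ p - 1 := by
  have := T.mod_sixteen
  omega

include T in
theorem neg_one_pow_eq_one : (-1 : ZMod p) ^ ((p - 1) / 4) = 1 :=
  Even.neg_one_pow ⟨2 * (p / 16), by have := T.mod_sixteen; omega⟩

include T in
theorem natAbs_pow (n : ℤ) :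
    (n.natAbs : ZMod p) ^ ((p - 1) / 4) = (n : ZMod p) ^ ((p - 1) / 4) := by
  rcases Int.natAbs_eq n with h | h <;> conv_rhs => rw [h]
  · rw [Int.cast_natCast]
  · rw [Int.cast_neg, Int.cast_natCast, neg_pow, T.neg_one_pow_eq_one, one_mul]

theorem exists_sub_σ_eq_ω_mul_r [CharZero S] : ∃ g : S, g - T.σ g = ι T.ω * T.r := by
  obtain ⟨m, hm⟩ : ∃ m, p = 16 * m + 1 := ⟨p / 16, by have := T.mod_sixteen; omega⟩
  have hpR : (p : R) = 16 * m + 1 := by rw [hm]; push_cast; rfl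
  have hω : T.ω ^ 2 = T.ω + 4 * m := by
    refine mul_left_cancel₀ (by norm_num : (4 : R) ≠ 0) ?_
    linear_combination (2 * T.ω - 1 + T.w) * T.two_mul_ω + T.w_sq + hpR
  have hω' := congrArg ι hω
  have hr : T.r ^ 2 = 2 * ι T.ω - 1 := by
    rw [T.r_sq, ← map_ofNat ι 2, ← map_mul, T.two_mul_ω, map_add, map_one]
    ring
  simp only [map_pow, map_add, map_mul, map_ofNat, map_natCast] at hω'
  obtain ⟨g, hg⟩ := dvd_of_sq_eq_mul_mul_add (d := 2) (a := ι T.ω) (b := 2 * m * ι T.ω)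
    (y := ι T.ω * (T.r + 1)) (by linear_combination (ι T.ω) ^ 2 * hr + 2 * ι T.ω * hω')
  refine ⟨g, mul_left_cancel₀ (two_ne_zero (α := S)) ?_⟩
  have hσg := congrArg T.σ hg
  rw [map_mul, map_mul, map_add, map_ofNat, map_one, T.σ_r, T.σ.commutes] at hσg
  linear_combination hσg - hg

variable [Module.Free ℤ R] [Module.Free ℤ S] [Module.Finite ℤ S]

theorem absNorm_span_eq_natAbs (α : S) : (Ideal.span {α}).absNorm =
    (Algebra.intNorm ℤ R (Algebra.intNorm R S α)).natAbs := by
  rw [← absNorm_span_intNorm R, absNorm_span_eq_natAbs_intNorm]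

theorem absNorm_span_r : (Ideal.span {T.r}).absNorm = p := by
  rw [absNorm_span_eq_natAbs (R := R), T.intNorm_r,
    T.intNorm_eq_of_intCast_eq (n := -p) (by rw [map_neg, T.τ_w]; push_cast; rw [← T.w_sq]; ring),
    Int.natAbs_neg, Int.natAbs_natCast]

section Reduction

variable [Fact p.Prime]

theorem isPrime_span_r : (Ideal.span {T.r}).IsPrime :=
  Ideal.isPrime_of_irreducible_absNorm (by
    rw [T.absNorm_span_r]
    exact (Fact.out : p.Prime))

theorem prime_r : Prime T.r :=
  (Ideal.span_singleton_prime T.r_ne_zero).1 T.isPrime_span_r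

theorem exists_ringHom_eq_zero_iff : ∃ ρ : S →+* ZMod p, ∀ x, ρ x = 0 ↔ T.r ∣ x := by
  have hcard : Nat.card (S ⧸ Ideal.span {T.r}) = p := by
    simpa only [Ideal.absNorm_apply, Submodule.cardQuot_apply] using T.absNorm_span_r
  have : Finite (S ⧸ Ideal.span {T.r}) :=
    Nat.finite_of_card_ne_zero (by rw [hcard]; exact (Fact.out : p.Prime).ne_zero)
  have : Fintype (S ⧸ Ideal.span {T.r}) := Fintype.ofFinite _
  let e := ZMod.ringEquivOfPrime _ Fact.out (Nat.card_eq_fintype_card.symm.trans hcard)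
  refine ⟨e.symm.toRingHom.comp (Ideal.Quotient.mk _), fun x ↦ ?_⟩
  rw [← Ideal.mem_span_singleton, ← Ideal.Quotient.eq_zero_iff_mem]
  exact map_eq_zero_iff e.symm e.symm.injective

/-- Reduction modulo the prime `r` of degree one above `p`. -/
noncomputable def reduction : S →+* ZMod p := T.exists_ringHom_eq_zero_iff.choose

theorem reduction_eq_zero_iff {x : S} : T.reduction x = 0 ↔ T.r ∣ x :=
  T.exists_ringHom_eq_zero_iff.choose_spec x

theorem reduction_σ (x : S) : T.reduction (T.σ x) = T.reduction x := by
  obtain ⟨n, hn⟩ := ZMod.intCast_surjective (T.reduction x)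
  obtain ⟨t, ht⟩ := (T.reduction_eq_zero_iff (x := x - n)).1
    (by rw [map_sub, map_intCast, hn, sub_self])
  have hσ := congrArg T.σ ht
  rw [map_sub, map_mul, map_intCast, T.σ_r] at hσ
  have hr : T.reduction T.r = 0 := T.reduction_eq_zero_iff.2 dvd_rfl
  rw [show T.σ x = n - T.r * T.σ t by linear_combination hσ, map_sub, map_mul, hr, map_intCast, hn,
    zero_mul, sub_zero]

theorem reduction_τ (x : R) : T.reduction (ι (T.τ x)) = T.reduction (ι x) := by
  obtain ⟨t, ht⟩ := T.exists_sub_τ_eq_w_mul x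
  have hw : T.reduction (ι T.w) = 0 :=
    T.reduction_eq_zero_iff.2 (T.r_sq ▸ dvd_pow_self _ two_ne_zero)
  have h := congrArg (fun y ↦ T.reduction (ι y)) ht
  simp only [map_sub, map_mul, hw, zero_mul] at h
  exact (sub_eq_zero.1 h).symm

theorem intCast_intNorm_intNorm (α : S) :
    (Algebra.intNorm ℤ R (Algebra.intNorm R S α) : ZMod p) = T.reduction α ^ 4 := by
  rw [← map_intCast (T.reduction.comp ι), T.intCast_intNorm, RingHom.comp_apply, map_mul, map_mul,
    T.reduction_τ, T.isQuadraticInvolution_σ.algebraMap_intNorm, map_mul, T.reduction_σ]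
  ring

include T

theorem quarticCharacter_span_of_not_dvd {α : S} (hα : ¬ T.r ∣ α) :
    quarticCharacter p S (Ideal.span {α}) = 1 := by
  have hα' : T.reduction α ≠ 0 := fun h ↦ hα (T.reduction_eq_zero_iff.1 h)
  have hn := T.intCast_intNorm_intNorm α
  have hdvd : ¬ p ∣ (Ideal.span {α}).absNorm := by
    rw [absNorm_span_eq_natAbs (R := R), ← Int.natCast_dvd, ← ZMod.intCast_zmod_eq_zero_iff_dvd, hn]
    exact pow_ne_zero 4 hα'
  rw [quarticCharacter_of_not_dvd hdvd, absNorm_span_eq_natAbs (R := R), T.natAbs_pow, hn,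
    pow_four_pow_eq_one T.four_dvd hα']

theorem quarticCharacter_span {α : S} (hα : α ≠ 0) :
    quarticCharacter p S (Ideal.span {α}) = 1 := by
  obtain ⟨β, hαβ, hβ⟩ :=
    (FiniteMultiplicity.of_prime_left T.prime_r hα).exists_eq_pow_mul_and_not_dvd
  rw [hαβ, ← Ideal.span_singleton_mul_span_singleton, ← Ideal.span_singleton_pow, map_mul, map_pow,
    quarticCharacter_of_absNorm_eq T.absNorm_span_r, one_pow, one_mul,
    T.quarticCharacter_span_of_not_dvd hβ]

/-- The quartic character as a character of the class group. -/
noncomputable def classCharacter : ClassGroup S →* ZMod p :=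
  classGroupLift (quarticCharacter p S) fun _ ↦ T.quarticCharacter_span

theorem classCharacter_mk0 (A : nonZeroDivisors (Ideal S)) :
    T.classCharacter (ClassGroup.mk0 A) = quarticCharacter p S A :=
  classGroupLift_mk0 ..

variable [CharZero S] [Finite (ClassGroup R)]

theorem quarticCharacter_map {C : Ideal R} (hC : C ≠ ⊥) :
    quarticCharacter p S (C.map ι) = 1 := by
  obtain ⟨d, hd, hCd⟩ := exists_pow_card_eq_span hC
  have hodd : quarticCharacter p S (C.map ι) ^ Nat.card (ClassGroup R) = 1 := by
    rw [← map_pow, ← Ideal.map_pow, hCd, Ideal.map_span, Set.image_singleton]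
    exact T.quarticCharacter_span (by simpa using hd)
  have hcop : Nat.Coprime 4 (Nat.card (ClassGroup R)) :=
    (Nat.coprime_two_left.2 T.odd_card_classGroup).pow_left 2
  simpa only [hcop.gcd_eq_one, pow_one] using
    pow_gcd_eq_one.2 ⟨quarticCharacter_pow_four T.four_dvd (map_algebraMap_ne_bot hC), hodd⟩

theorem quarticCharacter_sq {A : Ideal S} (hA : A ≠ ⊥) : quarticCharacter p S A ^ 2 = 1 := by
  have h := congrArg (quarticCharacter p S) (T.isQuadraticInvolution_σ.map_relNorm A)
  rw [map_mul, T.quarticCharacter_map (by rwa [Ne, Ideal.relNorm_eq_bot_iff])] at h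
  rw [sq, h]
  congr 1
  exact (quarticCharacter_map_equiv T.σ.toRingEquiv A).symm

theorem classCharacter_eq_one_or (c : ClassGroup S) :
    T.classCharacter c = 1 ∨ T.classCharacter c = -1 := by
  obtain ⟨A, rfl⟩ := ClassGroup.mk0_surjective c
  rw [classCharacter_mk0, ← sq_eq_one_iff]
  exact T.quarticCharacter_sq (nonZeroDivisors.coe_ne_zero A)

theorem quarticCharacter_r_pow_mul_mul_map {i : ℕ} {L : Ideal S} (hL : L.absNorm = 2)
    {C : Ideal R} (hC : C ≠ ⊥) :
    quarticCharacter p S (Ideal.span {T.r} ^ i * (L * C.map ι)) = 2 ^ ((p - 1) / 4) := by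
  have hp : ¬ p ∣ L.absNorm := by
    rw [hL, Nat.prime_dvd_prime_iff_eq Fact.out Nat.prime_two]
    rintro rfl
    exact absurd T.mod_sixteen (by decide)
  rw [map_mul, map_mul, map_pow, T.quarticCharacter_span T.r_ne_zero, T.quarticCharacter_map hC,
    quarticCharacter_of_not_dvd hp, hL, one_pow, one_mul, mul_one, Nat.cast_ofNat]

end Reduction

section Ramification

variable [Fact p.Prime] [CharZero S]

/-- The ramified primes are `r` and the primes above `2`: the elements `r` and `g` with
`g - σ g = ω * r` show that `2 * r` and `ω * r` are in every ramified prime. -/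
theorem eq_span_r_or_eq_primeOverTwo_of_map_eq_sq {P : Ideal R} {Q : Ideal S} [P.IsPrime]
    [Q.IsPrime] (hP : P ≠ ⊥) (hQ : P.map ι = Q ^ 2) :
    Q = Ideal.span {T.r} ∨ P = T.primeOverTwo ∧ Q.absNorm = 2 := by
  have hsub := T.isQuadraticInvolution_σ.sub_apply_mem_of_sq_dvd_map hP hQ.symm.dvd
  obtain ⟨hcomap, habs⟩ := T.isQuadraticInvolution_σ.comap_eq_and_absNorm_eq_of_sq_dvd_map hP
    hQ.symm.dvd
  obtain ⟨g, hg⟩ := T.exists_sub_σ_eq_ω_mul_r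
  by_cases hr : T.r ∈ Q
  · have := T.isPrime_span_r
    have : (Ideal.span {T.r}).IsMaximal :=
      this.isMaximal (by simpa using T.r_ne_zero)
    exact .inl (this.eq_of_le Ideal.IsPrime.ne_top' (by simpa using hr)).symm
  · have h2 : (2 : R) ∈ P := by
      rw [← hcomap, Ideal.mem_comap, map_ofNat]
      refine (Ideal.IsPrime.mem_or_mem ‹Q.IsPrime› ?_).resolve_right hr
      simpa [T.σ_r, two_mul] using hsub T.r
    have hω : T.ω ∈ P := by
      rw [← hcomap, Ideal.mem_comap]
      exact (Ideal.IsPrime.mem_or_mem ‹Q.IsPrime› (hg ▸ hsub g)).resolve_right hr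
    have hPtop : P ≠ ⊤ := Ideal.IsPrime.ne_top'
    exact .inr ⟨T.eq_primeOverTwo hPtop h2 hω, habs.trans (T.absNorm_eq_two hPtop h2 hω)⟩

theorem eq_r_pow_mul_of_map_eq_sq {N : Ideal R} (hN : N ≠ ⊥) {c : Ideal S} (hc : N.map ι = c ^ 2) :
    (∃ (i : ℕ) (C : Ideal R), C ≠ ⊥ ∧ c = Ideal.span {T.r} ^ i * C.map ι) ∨
      ∃ (i : ℕ) (C : Ideal R) (L : Ideal S), C ≠ ⊥ ∧ L.absNorm = 2 ∧ L ^ 2 = T.primeOverTwo.map ι ∧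
        c = Ideal.span {T.r} ^ i * (L * C.map ι) := by
  refine T.isQuadraticInvolution_σ.induction_of_map_eq_sq
    (motive := fun c ↦ (∃ (i : ℕ) (C : Ideal R), C ≠ ⊥ ∧ c = Ideal.span {T.r} ^ i * C.map ι) ∨
      ∃ (i : ℕ) (C : Ideal R) (L : Ideal S), C ≠ ⊥ ∧ L.absNorm = 2 ∧ L ^ 2 = T.primeOverTwo.map ι ∧
        c = Ideal.span {T.r} ^ i * (L * C.map ι)) ?_ ?_ ?_ hN hc
  · exact .inl ⟨0, ⊤, top_ne_bot, by rw [pow_zero, Ideal.map_top, one_mul, Ideal.one_eq_top]⟩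
  · rintro B _ hB (⟨i, C, hC, rfl⟩ | ⟨i, C, L, hC, hL, hL', rfl⟩)
    · exact .inl ⟨i, B * C, mul_ne_zero hB hC, by rw [Ideal.map_mul]; ring⟩
    · exact .inr ⟨i, B * C, L, mul_ne_zero hB hC, hL, hL', by rw [Ideal.map_mul]; ring⟩
  · rintro P Q _ _ _ hP hQ hc
    rcases T.eq_span_r_or_eq_primeOverTwo_of_map_eq_sq hP hQ with rfl | ⟨rfl, hQ2⟩
    · rcases hc with ⟨i, C, hC, rfl⟩ | ⟨i, C, L, hC, hL, hL', rfl⟩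
      · exact .inl ⟨i + 1, C, hC, by ring⟩
      · exact .inr ⟨i + 1, C, L, hC, hL, hL', by ring⟩
    · rcases hc with ⟨i, C, hC, rfl⟩ | ⟨i, C, L, hC, -, hL', rfl⟩
      · exact .inr ⟨i, C, Q, hC, hQ2, hQ.symm, by ring⟩
      · have hLQ : L = Q := pow_left_injective two_ne_zero (hL'.trans hQ)
        subst hLQ
        exact .inl ⟨i, T.primeOverTwo * C, mul_ne_zero hP hC, by
          rw [Ideal.map_mul, ← hL']; ring⟩

end Ramification

end PureQuarticTower

/-! ### Ambiguous classes when `2` is not a quartic residue -/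

theorem isSquare_of_isSquare_val {M : Type*} [CommMonoid M] {u : Mˣ} (hu : IsSquare (u : M)) :
    IsSquare u := by
  obtain ⟨x, hx⟩ := hu
  have hxu : IsUnit x := isUnit_of_mul_isUnit_left (hx ▸ u.isUnit)
  exact ⟨hxu.unit, Units.ext hx⟩

namespace PureQuarticTower

variable {p : ℕ} {R S : Type*} [CommRing R] [IsDedekindDomain R] [Module.Finite ℤ R] [CharZero R]
  [CommRing S] [IsDedekindDomain S] [Algebra R S] [Module.Finite R S] [Module.IsTorsionFree R S]
  (T : PureQuarticTower p R S)

local notation "ι" => algebraMap R S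

/-- The real place `ψ` of `R` becomes complex in `S`. -/
theorem ψ_intNorm_pos {γ : S} (hγ : γ ≠ 0) : 0 < T.ψ (Algebra.intNorm R S γ) := by
  obtain ⟨x, hx⟩ := T.isQuadraticInvolution_σ.exists_algebraMap_eq_add γ
  obtain ⟨z, hz⟩ := T.isQuadraticInvolution_σ.exists_algebraMap_eq_sub_mul T.σ_r γ
  have hN : 4 * T.w * Algebra.intNorm R S γ = T.w * x ^ 2 - z ^ 2 := by
    apply FaithfulSMul.algebraMap_injective R S
    simp only [map_sub, map_mul, map_pow, map_ofNat]
    rw [hx, hz, T.isQuadraticInvolution_σ.algebraMap_intNorm, ← T.r_sq]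
    ring
  have hψ := congrArg T.ψ hN
  simp only [map_sub, map_mul, map_pow, map_ofNat] at hψ
  have hw := T.ψ_w_neg
  have hne : T.ψ (Algebra.intNorm R S γ) ≠ 0 :=
    map_ne_zero_of_charZero T.ψ (by rwa [Ne, Algebra.intNorm_eq_zero])
  refine lt_of_le_of_ne (not_lt.1 fun hlt ↦ ?_) hne.symm
  nlinarith [mul_pos_of_neg_of_neg hw hlt, sq_nonneg (T.ψ x), sq_nonneg (T.ψ z),
    mul_nonneg (neg_nonneg.2 hw.le) (sq_nonneg (T.ψ x))]

theorem exists_unit_intNorm_eq {A : Ideal S} {γ : S} {b : R} (hγ : γ ≠ 0)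
    (hA : A ^ 2 = Ideal.span {γ}) (hb : Ideal.relNorm R A = Ideal.span {b}) :
    ∃ u : Rˣ, Algebra.intNorm R S γ = u * b ^ 2 ∧ 0 < T.ψ u := by
  have hspan : Ideal.span {Algebra.intNorm R S γ} = Ideal.span {b ^ 2} := by
    rw [← Ideal.relNorm_singleton, ← hA, map_pow, hb, Ideal.span_singleton_pow]
  obtain ⟨u, hu⟩ := (Ideal.span_singleton_eq_span_singleton.1 hspan).symm
  refine ⟨u, by rw [← hu, mul_comm], ?_⟩
  have hpos := T.ψ_intNorm_pos hγ
  rw [← hu, map_mul, map_pow] at hpos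
  exact pos_of_mul_pos_right hpos (sq_nonneg _)

section Units

variable [Module.Free ℤ R] [Fact p.Prime] {H : Subgroup Sˣ} (hsq : ∀ s : Sˣ, s ^ 2 ∈ H)

include T hsq

theorem units_map_mem_of_intNorm_eq_one (hneg : -1 ∈ H) {u : Rˣ}
    (hu : Algebra.intNorm ℤ R (u : R) = 1) : Units.map (ι : R →* S) u ∈ H := by
  have hmem : ∀ v : Rˣ, IsSquare (v : R) → Units.map (ι : R →* S) v ∈ H := by
    intro v hv
    obtain ⟨f, rfl⟩ := isSquare_of_isSquare_val hv
    rw [map_mul, ← sq]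
    exact hsq _
  rcases (map_ne_zero_of_charZero T.ψ u.ne_zero).lt_or_gt with h | h
  · rw [← H.mul_mem_cancel_left hneg]
    have hN : Algebra.intNorm ℤ R (-(u : R)) = 1 :=
      T.intNorm_eq_of_intCast_eq (by rw [map_neg, neg_mul_neg, ← T.intCast_intNorm, hu])
    convert hmem (-u) (T.isSquare_of_intNorm_eq_one hN (by simpa using h)) using 1
    ext
    simp
  · exact hmem u (T.isSquare_of_intNorm_eq_one hu h)

theorem units_map_mem (hneg : -1 ∈ H) {ε : Rˣ} (hε : Algebra.intNorm ℤ R (ε : R) = -1)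
    (hεH : Units.map (ι : R →* S) ε ∈ H) (u : Rˣ) : Units.map (ι : R →* S) u ∈ H := by
  rcases T.isUnit_iff_intNorm.1 u.isUnit with hu | hu
  · exact T.units_map_mem_of_intNorm_eq_one hsq hneg hu
  · rw [← H.mul_mem_cancel_right hεH, ← map_mul]
    exact T.units_map_mem_of_intNorm_eq_one hsq hneg (by
      rw [Units.val_mul, map_mul, hu, hε, neg_mul_neg, one_mul])

end Units

variable [Module.Free ℤ R] [Module.Free ℤ S] [Module.Finite ℤ S] [Fact p.Prime] [CharZero S]

theorem exists_mk0_eq_and_not_span_r_dvd (c : ClassGroup S) :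
    ∃ A : nonZeroDivisors (Ideal S), ClassGroup.mk0 A = c ∧ ¬ Ideal.span {T.r} ∣ (A : Ideal S) := by
  obtain ⟨A, rfl⟩ := ClassGroup.mk0_surjective c
  have hr : Prime (Ideal.span {T.r}) :=
    Ideal.prime_of_isPrime (by simpa using T.r_ne_zero) T.isPrime_span_r
  obtain ⟨B, hAB, hB⟩ := (FiniteMultiplicity.of_prime_left hr
    (nonZeroDivisors.coe_ne_zero A)).exists_eq_pow_mul_and_not_dvd
  have hB0 : B ≠ 0 := by
    rintro rfl
    exact hB (dvd_zero _)
  have hr0 : Ideal.span {T.r} ∈ nonZeroDivisors (Ideal S) :=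
    mem_nonZeroDivisors_of_ne_zero hr.ne_zero
  refine ⟨⟨B, mem_nonZeroDivisors_of_ne_zero hB0⟩, ?_, hB⟩
  have hA : A = ⟨_, hr0⟩ ^ multiplicity (Ideal.span {T.r}) (A : Ideal S) *
      ⟨B, mem_nonZeroDivisors_of_ne_zero hB0⟩ := Subtype.ext hAB
  rw [hA, map_mul, map_pow, mk0_eq_one_of_eq_span (A := ⟨_, hr0⟩) (x := T.r) rfl, one_pow, one_mul]

variable [Finite (ClassGroup R)]

include T in
theorem exists_eq_span_or_quarticCharacter_eq {a : R} (ha : a ≠ 0) {E : Ideal S}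
    (hE : Ideal.span {ι a} = E ^ 2) :
    (∃ (δ : S) (u : Rˣ), E = Ideal.span {δ} ∧ δ ^ 2 = ι (a * u)) ∨
      quarticCharacter p S E = 2 ^ ((p - 1) / 4) := by
  have hmap : (Ideal.span {a}).map ι = E ^ 2 := by rw [Ideal.map_span, Set.image_singleton, hE]
  rcases T.eq_r_pow_mul_of_map_eq_sq (by simpa using ha) hmap with
    ⟨i, C, hC, rfl⟩ | ⟨i, C, L, hC, hL, -, rfl⟩
  · left
    have haC : Ideal.span {a} = Ideal.span {T.w ^ i} * C ^ 2 := by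
      apply T.isQuadraticInvolution_σ.map_injective
      rw [hmap, Ideal.map_mul, Ideal.map_pow, Ideal.map_span, Set.image_singleton, map_pow,
        ← T.r_sq, mul_pow, Ideal.span_singleton_pow, Ideal.span_singleton_pow, pow_right_comm]
    obtain ⟨b, rfl⟩ : T.w ^ i ∣ a :=
      Ideal.mem_span_singleton.1 (Ideal.dvd_span_singleton.1 (Dvd.intro _ haC.symm))
    rw [← Ideal.span_singleton_mul_span_singleton] at haC
    have hb := mul_left_cancel₀ (by simpa using pow_ne_zero i T.w_ne_zero) haC
    obtain ⟨d, rfl⟩ := T.eq_span_of_sq_eq_span (right_ne_zero_of_mul ha) hb.symm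
    rw [Ideal.span_singleton_pow, Ideal.span_singleton_eq_span_singleton] at hb
    obtain ⟨u, hu⟩ := hb
    refine ⟨T.r ^ i * ι d, u, ?_, ?_⟩
    · rw [Ideal.map_span, Set.image_singleton, Ideal.span_singleton_pow,
        Ideal.span_singleton_mul_span_singleton]
    · rw [mul_assoc, hu, map_mul, map_pow, map_pow, ← T.r_sq]
      ring
  · exact .inr (T.quarticCharacter_r_pow_mul_mul_map hL hC)

theorem mk0_eq_one_or_classCharacter_eq {A : nonZeroDivisors (Ideal S)} {γ : S}
    (hA : (A : Ideal S) ^ 2 = Ideal.span {γ}) {m : R} (hm : Algebra.intNorm R S γ = m ^ 2) :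
    ClassGroup.mk0 A = 1 ∨ T.classCharacter (ClassGroup.mk0 A) = 2 ^ ((p - 1) / 4) := by
  have hA0 : (A : Ideal S) ≠ ⊥ := nonZeroDivisors.coe_ne_zero A
  have hγ : γ ≠ 0 := by
    rintro rfl
    exact pow_ne_zero 2 hA0 (by simpa using hA)
  obtain ⟨m, hm, hne⟩ : ∃ m : R, Algebra.intNorm R S γ = m ^ 2 ∧ γ + ι m ≠ 0 := by
    by_contra! h
    have h₁ := h m hm
    have h₂ := h (-m) (by rw [hm, neg_sq])
    rw [map_neg] at h₂
    exact hγ (mul_left_cancel₀ (two_ne_zero (α := S)) (by linear_combination h₁ + h₂))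
  obtain ⟨a, ha, hsq⟩ := T.isQuadraticInvolution_σ.exists_add_algebraMap_sq_eq hm hne
  obtain ⟨E, hAE, hE⟩ := exists_eq_sq_of_sq_eq_sq_mul (A := Ideal.span {γ + ι m})
    (N := Ideal.span {ι a}) hA0 (by
      rw [hA, Ideal.span_singleton_pow, hsq, Ideal.span_singleton_mul_span_singleton])
  have hE0 : E ≠ ⊥ := by
    rintro rfl
    exact hne (by simpa using hAE)
  have hclass : ClassGroup.mk0 A * ClassGroup.mk0 ⟨E, mem_nonZeroDivisors_of_ne_zero hE0⟩ = 1 := by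
    rw [← map_mul]
    exact mk0_eq_one_of_eq_span hAE.symm
  rcases T.exists_eq_span_or_quarticCharacter_eq ha hE with ⟨δ, -, hδ, -⟩ | hχ
  · left
    rwa [mk0_eq_one_of_eq_span (A := ⟨E, _⟩) hδ, mul_one] at hclass
  · right
    have hχA := congrArg T.classCharacter hclass
    rw [map_mul, map_one, T.classCharacter_mk0 ⟨E, _⟩, hχ] at hχA
    have hχE := T.quarticCharacter_sq hE0
    rw [hχ, sq] at hχE
    exact mul_right_cancel₀ (left_ne_zero_of_mul_eq_one hχE) (hχA.trans hχE.symm)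

section Units

variable {H : Subgroup Sˣ} (hsq : ∀ s : Sˣ, s ^ 2 ∈ H)

include T hsq

theorem mem_of_intNorm_eq_one (h2 : (2 : ZMod p) ^ ((p - 1) / 4) ≠ 1)
    (hR : ∀ u : Rˣ, Units.map (ι : R →* S) u ∈ H) {θ : Sˣ}
    (hθ : Algebra.intNorm R S (θ : S) = 1) : θ ∈ H := by
  by_cases hne : (θ : S) + ι 1 = 0
  · convert hR (-1)
    ext
    simpa [add_eq_zero_iff_eq_neg] using hne
  obtain ⟨a, ha, haθ⟩ := T.isQuadraticInvolution_σ.exists_add_algebraMap_sq_eq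
    (hθ.trans (one_pow 2).symm) hne
  have hspan : Ideal.span {ι a} = Ideal.span {(θ : S) + ι 1} ^ 2 := by
    rw [Ideal.span_singleton_pow, haθ, Ideal.span_singleton_mul_left_unit θ.isUnit]
  rcases T.exists_eq_span_or_quarticCharacter_eq ha hspan with ⟨δ, u, hδ, hu⟩ | hχ
  · obtain ⟨v, rfl⟩ := Ideal.span_singleton_eq_span_singleton.1 hδ
    have hv : θ * v ^ 2 = Units.map (ι : R →* S) u := by
      ext
      rw [map_mul, mul_pow, haθ] at hu
      exact mul_left_cancel₀ (a := ι a) (by simpa using ha) (by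
        rw [Units.coe_map, MonoidHom.coe_coe]
        push_cast
        linear_combination hu)
    rw [← H.mul_mem_cancel_right (hsq v), hv]
    exact hR u
  · exact absurd (hχ.symm.trans (T.quarticCharacter_span hne)) h2

end Units

include T in
/-- Otherwise every unit of `S` would be, up to squares, a unit of `R`, that is `±1` or `±ε`, which
the unit rank of `S` forbids. -/
theorem exists_intNorm_intNorm_eq_neg_one (h2 : (2 : ZMod p) ^ ((p - 1) / 4) ≠ 1) :
    ∃ η : S, Algebra.intNorm ℤ R (Algebra.intNorm R S η) = -1 := by
  by_contra! hno
  obtain ⟨e, he⟩ := T.exists_intNorm_eq_neg_one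
  obtain ⟨ε, rfl⟩ := T.isUnit_iff_intNorm.2 (.inr he)
  refine T.closure_sup_range_ne_top (Units.map (ι : R →* S) ε) (eq_top_iff.2 fun s _ ↦ ?_)
  set H := Subgroup.closure {-1, Units.map (ι : R →* S) ε} ⊔ (powMonoidHom 2 : Sˣ →* Sˣ).range
  have hsq (s : Sˣ) : s ^ 2 ∈ H := Subgroup.mem_sup_right ⟨s, rfl⟩
  have hR := T.units_map_mem hsq (Subgroup.mem_sup_left (Subgroup.subset_closure (by simp))) he
    (Subgroup.mem_sup_left (Subgroup.subset_closure (by simp)))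
  obtain ⟨e, he⟩ : IsSquare (Units.map (Algebra.intNorm R S) s) := by
    refine isSquare_of_isSquare_val (T.isSquare_of_intNorm_eq_one ?_ (T.ψ_intNorm_pos s.ne_zero))
    exact (T.isUnit_iff_intNorm.1 (s.isUnit.map (Algebra.intNorm R S))).resolve_right (hno s)
  have hθ : Units.map (Algebra.intNorm R S) (s * (Units.map (ι : R →* S) e)⁻¹) = 1 := by
    rw [map_mul, map_inv, he, mul_inv_eq_one]
    ext
    simp [T.isQuadraticInvolution_σ.intNorm_algebraMap, sq]
  rw [← H.mul_mem_cancel_right (H.inv_mem (hR e))]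
  exact T.mem_of_intNorm_eq_one hsq h2 hR (congrArg Units.val hθ)

/-- An ambiguous class equals its own power by the odd class number of `R`, and the relative norm of
that power is principal. -/
theorem exists_mk0_eq_of_sq_eq_one {c : ClassGroup S} (hc : c ^ 2 = 1) :
    ∃ (A : nonZeroDivisors (Ideal S)) (γ : S) (b : R), ClassGroup.mk0 A = c ∧
      (A : Ideal S) ^ 2 = Ideal.span {γ} ∧ Ideal.relNorm R (A : Ideal S) = Ideal.span {b} ∧
      ¬ T.r ∣ γ := by
  obtain ⟨A, rfl, hA⟩ := T.exists_mk0_eq_and_not_span_r_dvd c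
  have hA0 : (A : Ideal S) ≠ ⊥ := nonZeroDivisors.coe_ne_zero A
  have hpow : ClassGroup.mk0 A ^ Nat.card (ClassGroup R) = ClassGroup.mk0 A := by
    obtain ⟨k, hk⟩ := T.odd_card_classGroup
    rw [hk, pow_succ, pow_mul, hc, one_pow, one_mul]
  obtain ⟨b, -, hb⟩ := exists_pow_card_eq_span (A := Ideal.relNorm R (A : Ideal S))
    (by rwa [Ne, Ideal.relNorm_eq_bot_iff])
  obtain ⟨γ, -, hγ⟩ := exists_eq_span_of_mk0_eq_one (A := (A ^ Nat.card (ClassGroup R)) ^ 2)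
    (by rw [map_pow, map_pow, hpow, hc])
  rw [SubmonoidClass.coe_pow, SubmonoidClass.coe_pow] at hγ
  refine ⟨A ^ Nat.card (ClassGroup R), γ, b, by rw [map_pow, hpow], hγ, by simpa using hb,
    fun hr ↦ hA ?_⟩
  have hprime : Prime (Ideal.span {T.r}) :=
    Ideal.prime_of_isPrime (by simpa using T.r_ne_zero) T.isPrime_span_r
  have hdvd : Ideal.span {T.r} ∣ ((A : Ideal S) ^ Nat.card (ClassGroup R)) ^ 2 :=
    hγ ▸ Ideal.dvd_span_singleton.2 (Ideal.mem_span_singleton.2 hr)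
  exact hprime.dvd_of_dvd_pow (hprime.dvd_of_dvd_pow hdvd)

theorem classCharacter_eq_of_sq_eq_one (h2 : (2 : ZMod p) ^ ((p - 1) / 4) ≠ 1) {c : ClassGroup S}
    (hc : c ^ 2 = 1) (hc1 : c ≠ 1) : T.classCharacter c = 2 ^ ((p - 1) / 4) := by
  obtain ⟨A, γ, b, rfl, hA, hb, hγ⟩ := T.exists_mk0_eq_of_sq_eq_one hc
  have hγ0 : γ ≠ 0 := by
    rintro rfl
    exact hγ (dvd_zero _)
  obtain ⟨u, hu, hpos⟩ := T.exists_unit_intNorm_eq hγ0 hA hb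
  obtain ⟨δ, v, hδ, hv, hNv, hvpos⟩ : ∃ (δ : S) (v : R), (A : Ideal S) ^ 2 = Ideal.span {δ} ∧
      Algebra.intNorm R S δ = v * b ^ 2 ∧ Algebra.intNorm ℤ R v = 1 ∧ 0 < T.ψ v := by
    rcases T.isUnit_iff_intNorm.1 u.isUnit with h | h
    · exact ⟨γ, u, hA, hu, h, hpos⟩
    · obtain ⟨η, hη⟩ := T.exists_intNorm_intNorm_eq_neg_one h2
      have hηu : IsUnit η := T.isQuadraticInvolution_σ.isUnit_intNorm_iff.1
        (T.isUnit_iff_intNorm.2 (.inr hη))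
      refine ⟨η * γ, Algebra.intNorm R S η * u, ?_, ?_, ?_, ?_⟩
      · rw [hA, Ideal.span_singleton_mul_left_unit hηu]
      · rw [map_mul, hu, mul_assoc]
      · rw [map_mul, h, hη, neg_mul_neg, one_mul]
      · rw [map_mul]
        exact mul_pos (T.ψ_intNorm_pos hηu.ne_zero) hpos
  obtain ⟨e, rfl⟩ := T.isSquare_of_intNorm_eq_one hNv hvpos
  exact (T.mk0_eq_one_or_classCharacter_eq hδ (m := e * b) (by rw [hv]; ring)).resolve_left hc1

end PureQuarticTower

/-! ### Ambiguous classes when `2` is a quartic residue -/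

theorem isCoprime_sq_add_sq_of_prime {a c : ℤ} (h : Prime (a ^ 2 + c ^ 2)) :
    IsCoprime a (a ^ 2 + c ^ 2) := by
  refine (h.coprime_iff_not_dvd.2 fun ha ↦ ?_).symm
  have hc : a ^ 2 + c ^ 2 ∣ c :=
    h.dvd_of_dvd_pow ((Int.dvd_add_right (dvd_pow ha two_ne_zero)).1 dvd_rfl)
  obtain ⟨x, hx⟩ := ha
  obtain ⟨y, hy⟩ := hc
  refine h.not_isUnit (.of_mul_eq_one (x ^ 2 + y ^ 2) ?_)
  refine mul_left_cancel₀ h.ne_zero ?_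
  linear_combination -(a + (a ^ 2 + c ^ 2) * x) * hx - (c + (a ^ 2 + c ^ 2) * y) * hy

theorem exists_add_intCast_ne_zero {F : Type*} [Field F] (h2 : (2 : F) ≠ 0) {v : F} (hv : v ≠ 0)
    (n : ℤ) : ∃ m : ℤ, (m = n ∨ m = -n) ∧ v + m ≠ 0 := by
  by_cases h : v + n = 0
  · refine ⟨-n, .inr rfl, fun h' ↦ mul_ne_zero h2 hv ?_⟩
    push_cast at h'
    linear_combination h + h'
  · exact ⟨n, .inl rfl, h⟩

namespace RealQuadraticRing

variable {p : ℕ} {R : Type*} [CommRing R] [IsDedekindDomain R] [Module.Finite ℤ R] [CharZero R]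
  (T : RealQuadraticRing p R) [Fact p.Prime]

theorem isCoprime_w_add_w_sub {a c : ℤ} (hac : a ^ 2 + c ^ 2 = p) (hc : Even c) :
    IsCoprime (T.w + c) (T.w - c) := by
  have hodd : Odd a := by
    have hp : Odd (p : ℤ) := Int.odd_iff.2 (by have := T.mod_four; omega)
    by_contra ha
    rw [← hac, ← Int.not_even_iff_odd] at hp
    exact hp (((Int.not_odd_iff_even.1 ha).pow_of_ne_zero two_ne_zero).add
      (hc.pow_of_ne_zero two_ne_zero))
  have ha2 : IsCoprime a 2 := Int.isCoprime_two_right.2 hodd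
  have hap : IsCoprime a p :=
    hac ▸ isCoprime_sq_add_sq_of_prime (hac ▸ Nat.prime_iff_prime_int.1 Fact.out)
  obtain ⟨s, t, hst⟩ : IsCoprime (a ^ 2) (2 ^ 2 * p : ℤ) := ha2.pow.mul_right hap.pow_left
  have hac' : (a : R) ^ 2 + (c : R) ^ 2 = T.w ^ 2 := by
    rw [T.w_sq]
    exact_mod_cast congrArg (Int.cast (R := R)) hac
  have hst' := congrArg (Int.cast (R := R)) hst
  push_cast at hst'
  rw [← T.w_sq] at hst'
  exact ⟨s * (T.w - c) + t * 2 * T.w, t * 2 * T.w, by linear_combination hst' - s * hac'⟩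

variable [Module.Free ℤ R]

theorem exists_sq_eq_neg_mul_w_add {u : R} (hu : Algebra.intNorm ℤ R u = -1) (hpos : 0 < T.ψ u)
    {a c : ℤ} (hac : a ^ 2 + c ^ 2 = p) (hc : Even c) : ∃ s : R, s ^ 2 = -u * (T.w + c) := by
  have ha : a.natAbs ≠ 0 := by
    rintro ha
    rw [Int.natAbs_eq_zero] at ha
    refine (Nat.prime_iff_prime_int.1 (Fact.out : p.Prime)).irreducible.not_isSquare ⟨c, ?_⟩
    rw [← hac, ha]
    ring
  have hac' : (a : R) ^ 2 + (c : R) ^ 2 = T.w ^ 2 := by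
    rw [T.w_sq]
    exact_mod_cast congrArg (Int.cast (R := R)) hac
  obtain ⟨E, hE⟩ := exists_eq_sq_of_mul_eq_sq_of_isCoprime (T.isCoprime_w_add_w_sub hac hc)
    (a := (a : R)) (by linear_combination -hac')
  have hneg : T.ψ T.w + c < 0 := by
    have hsq : (a : ℝ) ^ 2 + (c : ℝ) ^ 2 = T.ψ T.w ^ 2 := by
      simpa using congrArg T.ψ hac'
    have ha' : (0 : ℝ) < a ^ 2 := by
      have : a ≠ 0 := by simpa using ha
      positivity
    nlinarith [T.ψ_w_neg]
  obtain ⟨s, hs⟩ := T.isSquare_of_intNorm_eq_sq (t := -u * (T.w + c)) (c := E) ha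
    (by
      rw [map_mul, map_neg, map_add, map_intCast]
      exact mul_pos_of_neg_of_neg (neg_neg_of_pos hpos) hneg)
    (T.intNorm_eq_of_intCast_eq (by
      have hu' := T.intCast_intNorm u
      rw [hu] at hu'
      rw [Int.natAbs_sq]
      simp only [map_mul, map_neg, map_add, map_intCast, T.τ_w]
      push_cast at hu' ⊢
      linear_combination (T.w + c) * (-T.w + c) * hu' + hac'))
    (by rw [Ideal.span_singleton_mul_left_unit (T.isUnit_iff_intNorm.2 (.inr hu)).neg, hE])
  exact ⟨s, by rw [hs, sq]⟩

/-- With `a + c i` the Jacobi sum of a quartic character modulo `p`, so that `p = a ^ 2 + c ^ 2`,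
the element `ρ = z * (w + a + c) / s`, where `s ^ 2 = -u * (w + c)`, satisfies
`ρ ^ 2 = 2 * w * (w + a)`; the signs of `a` and `c` are chosen so that neither `w + a` nor `w + c`
vanishes. -/
theorem exists_pow_four_eq_natCard_of_sq_eq (hp : 8 ∣ p - 1) {u : R}
    (hu : Algebra.intNorm ℤ R u = -1) (hpos : 0 < T.ψ u) {F : Type*} [Field F] [Finite F]
    (π : R →+* F) (h2 : (2 : F) ≠ 0) (hw : π T.w ≠ 0) (hF : IsSquare (Nat.card F : ZMod p)) {z : F}
    (hz : z ^ 2 = -(π u * π T.w)) : ∃ y : ZMod p, y ^ 4 = Nat.card F := by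
  obtain ⟨χ, hχ, hac, hc⟩ := exists_mulChar_gaussianInt (p := p) (by omega)
  obtain ⟨a, ha, hwa⟩ := exists_add_intCast_ne_zero h2 hw (jacobiSum χ χ).re
  obtain ⟨c, hc', hwc⟩ := exists_add_intCast_ne_zero h2 hw (jacobiSum χ χ).im
  replace hac : a ^ 2 + c ^ 2 = p := by
    rw [sq_eq_sq_iff_eq_or_eq_neg.2 ha, sq_eq_sq_iff_eq_or_eq_neg.2 hc', hac]
  replace hc : Even c := by rcases hc' with rfl | rfl <;> simpa using hc
  obtain ⟨s, hs⟩ := T.exists_sq_eq_neg_mul_w_add hu hpos hac hc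
  have hsπ : π s ^ 2 = -π u * (π T.w + c) := by simpa using congrArg π hs
  have hu0 : π u ≠ 0 := ((T.isUnit_iff_intNorm.2 (.inr hu)).map π).ne_zero
  have hs0 : π s ≠ 0 := by
    rw [← pow_ne_zero_iff two_ne_zero, hsπ]
    exact mul_ne_zero (neg_ne_zero.2 hu0) hwc
  have hw2 : π T.w ^ 2 = p := by rw [← map_pow, T.w_sq, map_natCast]
  have hacF : (a : F) ^ 2 + (c : F) ^ 2 = π T.w ^ 2 := by
    rw [hw2]
    exact_mod_cast congrArg (Int.cast (R := F)) hac
  have hρ : (z * (π T.w + a + c) / π s) ^ 2 = 2 * π T.w * (π T.w + a) := by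
    rw [div_pow, div_eq_iff (pow_ne_zero _ hs0), mul_pow, hz, hsπ]
    linear_combination -π u * π T.w * hacF
  have hρ0 : z * (π T.w + a + c) / π s ≠ 0 := by
    rw [← pow_ne_zero_iff two_ne_zero, hρ]
    exact mul_ne_zero (mul_ne_zero h2 hw) hwa
  have hpF : (p : F) ≠ 0 := hw2 ▸ pow_ne_zero 2 hw
  rcases ha with rfl | rfl
  · exact exists_pow_four_eq_natCard hp hχ h2 hpF hF hw2 hρ0 hρ
  · refine exists_pow_four_eq_natCard hp hχ h2 hpF hF ((neg_sq _).trans hw2) hρ0 (hρ.trans ?_)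
    push_cast
    ring

include T in
theorem absNorm_eq_two_of_two_mem (hp : p % 8 = 1) {P : Ideal R} [P.IsPrime] (h2 : (2 : R) ∈ P) :
    P.absNorm = 2 := by
  have hP : P ≠ ⊤ := Ideal.IsPrime.ne_top inferInstance
  have hτω : T.τ T.ω = 1 - T.ω := by
    linear_combination T.two_mul_ω - T.ω_sub_τ_ω
  have hω : T.ω * T.τ T.ω ∈ P := by
    have hw : T.w ^ 2 = 1 + 8 * (p / 8 : ℕ) := by
      rw [T.w_sq]
      exact_mod_cast congrArg (Nat.cast (R := R)) (show p = 1 + 8 * (p / 8) by omega)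
    have h : T.ω * T.τ T.ω = 2 * -(p / 8 : ℕ) := by
      refine mul_left_cancel₀ (by norm_num : (4 : R) ≠ 0) ?_
      rw [hτω]
      linear_combination (1 - 2 * T.ω - T.w) * T.two_mul_ω - hw
    rw [h]
    exact Ideal.mul_mem_right _ _ h2
  rcases Ideal.IsPrime.mem_or_mem inferInstance hω with h | h
  · exact T.absNorm_eq_two hP h2 h
  · have : (P.comap T.τ).IsPrime := inferInstance
    have hcomap := T.absNorm_eq_two (P := P.comap T.τ) this.ne_top
      (by rwa [Ideal.mem_comap, map_ofNat]) h
    rw [← hcomap, ← absNorm_map_equiv T.τ.toRingEquiv (P.comap T.τ)]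
    congr 1
    exact (Ideal.map_comap_of_surjective T.τ T.τ.surjective P).symm

theorem w_notMem_of_not_dvd_absNorm {P : Ideal R} (hP : P ≠ ⊤) (hpP : ¬ p ∣ P.absNorm) :
    T.w ∉ P := by
  intro hw
  have h := Ideal.absNorm_dvd_absNorm_of_le ((Ideal.span_singleton_le_iff_mem P).2 hw)
  rw [absNorm_span_eq_natAbs_intNorm, T.intNorm_w, Int.natAbs_neg, Int.natAbs_natCast,
    Nat.dvd_prime Fact.out, Ideal.absNorm_eq_one_iff] at h
  exact h.elim hP fun h ↦ hpP h.symm.dvd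

end RealQuadraticRing

namespace PureQuarticTower

variable {p : ℕ} {R S : Type*} [CommRing R] [IsDedekindDomain R] [Module.Finite ℤ R] [CharZero R]
  [CommRing S] [IsDedekindDomain S] [Algebra R S] [Module.Finite R S] [Module.IsTorsionFree R S]
  (T : PureQuarticTower p R S) [Module.Free ℤ R] [Module.Free ℤ S] [Module.Finite ℤ S]
  [Fact p.Prime] [CharZero S]

local notation "ι" => algebraMap R S

section

variable [Finite (ClassGroup R)]

include T in
theorem quarticCharacter_base_sq {C : Ideal R} (hC : C ≠ ⊥) : quarticCharacter p R C ^ 2 = 1 := by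
  rw [← T.quarticCharacter_map hC, quarticCharacter_apply, quarticCharacter_apply,
    T.isQuadraticInvolution_σ.absNorm_map_algebraMap, Nat.factorization_pow, ← pow_mul,
    mul_comm _ 2, pow_mul, ← Nat.cast_pow, Finsupp.smul_apply, smul_eq_mul, mul_comm 2, pow_mul,
    ← Nat.div_pow (Nat.ordProj_dvd _ _)]

include T in
theorem isSquare_natCast_absNorm {C : Ideal R} (hC : C ≠ ⊥) (hpC : ¬ p ∣ C.absNorm) :
    IsSquare (C.absNorm : ZMod p) := by
  have h4 := T.four_dvd
  have hne : (C.absNorm : ZMod p) ≠ 0 := by rwa [Ne, ZMod.natCast_eq_zero_iff]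
  rw [ZMod.euler_criterion p hne]
  have h := T.quarticCharacter_base_sq hC
  rw [quarticCharacter_of_not_dvd hpC, ← pow_mul] at h
  rw [← h]
  congr 1
  omega

theorem quarticCharacter_eq_one_of_one_add_mul_sq_mem {u : R} (hu : Algebra.intNorm ℤ R u = -1)
    (hpos : 0 < T.ψ u) {P : Ideal R} [P.IsPrime] (hP : P ≠ ⊥) (hpP : ¬ p ∣ P.absNorm)
    (h2 : (2 : R) ∉ P) {t : R} (ht : 1 + u * T.w * t ^ 2 ∈ P) : quarticCharacter p R P = 1 := by
  have hmax : P.IsMaximal := Ideal.IsPrime.isMaximal inferInstance hP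
  let _ : Field (R ⧸ P) := Ideal.Quotient.field P
  have : Finite (R ⧸ P) := Ideal.finiteQuotientOfFreeOfNeBot P hP
  have hcard : P.absNorm = Nat.card (R ⧸ P) := by
    rw [Ideal.absNorm_apply, Submodule.cardQuot_apply]
  have hπ (x : R) : Ideal.Quotient.mk P x = 0 ↔ x ∈ P := Ideal.Quotient.eq_zero_iff_mem
  have ht' := (hπ _).2 ht
  simp only [map_add, map_one, map_mul, map_pow] at ht'
  have h8 : 8 ∣ p - 1 := by have := T.mod_sixteen; omega
  obtain ⟨y, hy⟩ := T.exists_pow_four_eq_natCard_of_sq_eq h8 hu hpos (Ideal.Quotient.mk P)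
    (by simpa only [map_ofNat] using (hπ 2).not.2 h2)
    ((hπ _).not.2 (T.w_notMem_of_not_dvd_absNorm hmax.ne_top hpP))
    (hcard ▸ T.isSquare_natCast_absNorm hP hpP) (z := (Ideal.Quotient.mk P t)⁻¹)
    (by
      rw [inv_pow]
      exact inv_eq_of_mul_eq_one_right (by linear_combination -ht'))
  rw [quarticCharacter_of_not_dvd hpP, hcard, ← hy]
  refine pow_four_pow_eq_one T.four_dvd fun hy0 ↦ hpP ?_
  rw [← ZMod.natCast_eq_zero_iff, hcard, ← hy, hy0, zero_pow four_ne_zero]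

end

theorem not_sq_dvd_map {P : Ideal R} [P.IsPrime] (hP : P ≠ ⊥) (h2 : (2 : R) ∉ P) (hw : T.w ∉ P)
    {Q : Ideal S} [Q.IsPrime] : ¬ Q ^ 2 ∣ P.map ι := by
  intro hQ
  rcases T.eq_span_r_or_eq_primeOverTwo_of_map_eq_sq hP
    (T.isQuadraticInvolution_σ.map_eq_sq_of_sq_dvd_map hP hQ) with h | ⟨h, -⟩
  · refine hw ?_
    rw [← (T.isQuadraticInvolution_σ.comap_eq_and_absNorm_eq_of_sq_dvd_map hP hQ).1,
      Ideal.mem_comap, ← T.r_sq, h]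
    exact Ideal.pow_mem_of_mem _ (Ideal.mem_span_singleton_self _) 2 two_pos
  · exact h2 (h ▸ Ideal.subset_span (by simp))

/-- At an unramified prime the order of a square ideal is even, so an odd order of vanishing of both
`γ + σ γ` and `(γ - σ γ) * r`, hence of `γ` and `σ γ`, is never exact. -/
theorem mem_pow_succ_of_odd {A : Ideal S} {γ : S} (hA : A ^ 2 = Ideal.span {γ}) {x y : R}
    (hx : ι x = γ + T.σ γ) (hy : ι y = (γ - T.σ γ) * T.r) {P : Ideal R} [P.IsPrime] (hP : P ≠ ⊥)
    (h2 : (2 : R) ∉ P) (hw : T.w ∉ P) {e : ℕ} (he : Odd e) (hxP : x ∈ P ^ e) (hyP : y ∈ P ^ e) :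
    x ∈ P ^ (e + 1) := by
  have hmax : P.IsMaximal := Ideal.IsPrime.isMaximal inferInstance hP
  obtain ⟨Q, hQmax, hQover⟩ := Ideal.exists_maximal_ideal_liesOver_of_isIntegral (S := S) P
  have hQ : Q.IsPrime := hQmax.isPrime
  have hcomap : Q.comap ι = P := hQover.over.symm
  have hQP : Q ∣ P.map ι := Ideal.dvd_iff_le.2 (Ideal.map_le_iff_le_comap.2 hcomap.ge)
  have hQ0 : Prime Q :=
    Ideal.prime_of_isPrime (ne_zero_of_dvd_ne_zero (map_algebraMap_ne_bot hP) hQP) hQ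
  have h2r : 2 * T.r ∉ Q := by
    rw [hQ.mul_mem_iff_mem_or_mem]
    rintro (h | h)
    · exact h2 (hcomap ▸ by rwa [Ideal.mem_comap, map_ofNat])
    · exact hw (hcomap ▸ by
        rw [Ideal.mem_comap, ← T.r_sq]
        exact Ideal.pow_mem_of_mem _ h 2 two_pos)
  have hmem {z : R} (hz : z ∈ P ^ e) : ι z ∈ Q ^ e :=
    Ideal.pow_right_mono (Ideal.dvd_iff_le.1 hQP) e
      (Ideal.map_pow ι P e ▸ Ideal.mem_map_of_mem ι hz)
  have hγ : γ ∈ Q ^ e := by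
    refine (Ideal.IsPrime.mul_mem_pow Q (?_ : 2 * T.r * γ ∈ Q ^ e)).resolve_left h2r
    rw [show 2 * T.r * γ = T.r * ι x + ι y by rw [hx, hy]; ring]
    exact Ideal.add_mem _ (Ideal.mul_mem_left _ _ (hmem hxP)) (hmem hyP)
  have hσγ : T.σ γ ∈ Q ^ e := by
    rw [eq_sub_of_add_eq' hx.symm]
    exact Ideal.sub_mem _ (hmem hxP) hγ
  have hAσ : (A.map T.σ) ^ 2 = Ideal.span {T.σ γ} := by
    rw [← Ideal.map_pow, hA, Ideal.map_span, Set.image_singleton]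
  have hsucc {B : Ideal S} {z : S} (hB : B ^ 2 = Ideal.span {z}) (hz : z ∈ Q ^ e) :
      z ∈ Q ^ (e + 1) := by
    rw [← Ideal.dvd_span_singleton, ← hB] at hz ⊢
    exact pow_succ_dvd_sq_of_odd hQ0 he hz
  rw [← Ideal.dvd_span_singleton]
  refine pow_dvd_of_pow_dvd_map_of_not_sq_dvd_map hQ0 hQP (T.not_sq_dvd_map hP h2 hw) ?_
  rw [Ideal.map_span, Set.image_singleton, Ideal.dvd_span_singleton, hx]
  exact Ideal.add_mem _ (hsucc hA hγ) (hsucc hAσ hσγ)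

omit [CharZero S] in
theorem intCast_intNorm_eq_reduction_sq (x : R) :
    (Algebra.intNorm ℤ R x : ZMod p) = T.reduction (ι x) ^ 2 := by
  rw [← map_intCast (T.reduction.comp ι), T.intCast_intNorm, map_mul, RingHom.comp_apply,
    RingHom.comp_apply, T.reduction_τ, sq]

omit [CharZero S] in
theorem dvd_absNorm_span_iff {x : R} :
    p ∣ (Ideal.span {x}).absNorm ↔ T.reduction (ι x) = 0 := by
  rw [absNorm_span_eq_natAbs_intNorm, ← Int.natCast_dvd, ← ZMod.intCast_zmod_eq_zero_iff_dvd,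
    T.intCast_intNorm_eq_reduction_sq, sq_eq_zero_iff]

omit [CharZero S] in
theorem quarticCharacter_base_span {x : R} (hx : T.reduction (ι x) ≠ 0) :
    quarticCharacter p R (Ideal.span {x}) = (T.reduction (ι x) ^ 2) ^ ((p - 1) / 4) := by
  rw [quarticCharacter_of_not_dvd (T.dvd_absNorm_span_iff.not.2 hx), absNorm_span_eq_natAbs_intNorm,
    T.natAbs_pow, T.intCast_intNorm_eq_reduction_sq]

variable [Finite (ClassGroup R)]

section UnitNormNegOne

variable {A : Ideal S} {γ : S} {u b : R}

theorem quarticCharacter_span_trace (h2 : (2 : ZMod p) ^ ((p - 1) / 4) = 1)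
    (hA : A ^ 2 = Ideal.span {γ}) (hu : Algebra.intNorm ℤ R u = -1) (hpos : 0 < T.ψ u)
    (hγ : Algebra.intNorm R S γ = u * b ^ 2) {x : R} (hx : ι x = γ + T.σ γ)
    (hpx : ¬ p ∣ (Ideal.span {x}).absNorm) :
    quarticCharacter p R (Ideal.span {x}) = 1 := by
  have hx0 : Ideal.span {x} ≠ ⊥ := by
    intro h
    simp [h] at hpx
  obtain ⟨y, hy⟩ := T.isQuadraticInvolution_σ.exists_algebraMap_eq_sub_mul T.σ_r γ
  have hxy : T.w * x ^ 2 - y ^ 2 = u * T.w * (2 * b) ^ 2 := by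
    apply FaithfulSMul.algebraMap_injective R S
    have hN := T.isQuadraticInvolution_σ.algebraMap_intNorm γ
    rw [hγ, map_mul, map_pow] at hN
    simp only [map_sub, map_mul, map_pow, map_ofNat]
    rw [hx, hy, ← T.r_sq]
    linear_combination -4 * T.r ^ 2 * hN
  refine map_eq_one_of_forall_exact_pow _ hx0 fun P e hP hPx he he' ↦ ?_
  have hP0 : P ≠ ⊥ := ne_zero_of_dvd_ne_zero hx0 hPx
  have hpP : ¬ p ∣ P.absNorm := fun h ↦ hpx (h.trans (map_dvd Ideal.absNorm hPx))
  by_cases hP2 : (2 : R) ∈ P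
  · have hp8 : p % 8 = 1 := by have := T.mod_sixteen; omega
    rw [quarticCharacter_of_not_dvd hpP, T.absNorm_eq_two_of_two_mem hp8 hP2, Nat.cast_ofNat, h2,
      one_pow]
  rcases e.even_or_odd with ⟨k, rfl⟩ | hodd
  · rw [← two_mul, pow_mul, T.quarticCharacter_base_sq hP0, one_pow]
  have hw : T.w ∉ P := T.w_notMem_of_not_dvd_absNorm hP.ne_top hpP
  have huw : u * T.w ∉ P := by
    rw [hP.mul_mem_iff_mem_or_mem]
    exact not_or.2 ⟨fun h ↦ hP.ne_top (P.eq_top_of_isUnit_mem h (T.isUnit_iff_intNorm.2 (.inr hu))),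
      hw⟩
  rw [Ideal.dvd_span_singleton] at he he'
  obtain ⟨t, ht⟩ := exists_one_add_mul_sq_mem (Ideal.prime_of_isPrime hP0 hP) he
    (fun hyP ↦ he' (T.mem_pow_succ_of_odd hA hx hy hP0 hP2 hw hodd he hyP)) huw hxy
  rw [T.quarticCharacter_eq_one_of_one_add_mul_sq_mem hu hpos hP0 hpP hP2 ht, one_pow]

/-- The trace `x` of `γ` reduces to `2 * ρ(γ)`, and `ρ(γ) ^ 2 = ρ(u) * ρ(b) ^ 2`. -/
theorem quarticCharacter_eq_one_of_intNorm_eq_neg_one (h2 : (2 : ZMod p) ^ ((p - 1) / 4) = 1)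
    (hA : A ^ 2 = Ideal.span {γ}) (hb : Ideal.relNorm R A = Ideal.span {b}) (hr : ¬ T.r ∣ γ)
    (hu : Algebra.intNorm ℤ R u = -1) (hpos : 0 < T.ψ u)
    (hγ : Algebra.intNorm R S γ = u * b ^ 2) : quarticCharacter p S A = 1 := by
  obtain ⟨x, hx⟩ := T.isQuadraticInvolution_σ.exists_algebraMap_eq_add γ
  have hργ : T.reduction γ ≠ 0 := T.reduction_eq_zero_iff.not.2 hr
  have hρx : T.reduction (ι x) = 2 * T.reduction γ := by
    rw [hx, map_add, T.reduction_σ, two_mul]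
  have hργ2 : T.reduction γ ^ 2 = T.reduction (ι u) * T.reduction (ι b) ^ 2 := by
    have h := congrArg T.reduction (T.isQuadraticInvolution_σ.algebraMap_intNorm γ)
    rw [hγ, map_mul, map_mul, map_pow, map_mul, T.reduction_σ, map_pow] at h
    rw [h, sq]
  have hρb : T.reduction (ι b) ≠ 0 := by
    intro h
    simp [h, hργ] at hργ2
  have hρu : T.reduction (ι u) ^ ((p - 1) / 4) = 1 := by
    rw [show (p - 1) / 4 = 2 * (2 * (p / 16)) by have := T.mod_sixteen; omega, pow_mul,
      ← T.intCast_intNorm_eq_reduction_sq, hu, Int.cast_neg, Int.cast_one,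
      (even_two_mul _).neg_one_pow]
  have hρx0 : T.reduction (ι x) ≠ 0 := by
    rw [hρx]
    refine mul_ne_zero (fun h ↦ ?_) hργ
    rw [h, zero_pow (by have := T.mod_sixteen; have := (Fact.out : p.Prime).two_le; omega)] at h2
    exact zero_ne_one h2
  have hχx := T.quarticCharacter_span_trace h2 hA hu hpos hγ hx (T.dvd_absNorm_span_iff.not.2 hρx0)
  have hχA : quarticCharacter p S A = quarticCharacter p R (Ideal.span {b}) := by
    rw [quarticCharacter_apply, quarticCharacter_apply, ← hb, Ideal.absNorm_relNorm]
  rw [hχA, T.quarticCharacter_base_span hρb, ← hχx, T.quarticCharacter_base_span hρx0, hρx, mul_pow,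
    hργ2, mul_pow, mul_pow, hρu, pow_right_comm 2, h2, one_pow, one_mul, one_mul]

end UnitNormNegOne

theorem classCharacter_eq_one_of_sq_eq_one (h2 : (2 : ZMod p) ^ ((p - 1) / 4) = 1)
    {c : ClassGroup S} (hc : c ^ 2 = 1) : T.classCharacter c = 1 := by
  obtain ⟨A, γ, b, rfl, hA, hb, hγ⟩ := T.exists_mk0_eq_of_sq_eq_one hc
  have hγ0 : γ ≠ 0 := by
    rintro rfl
    exact hγ (dvd_zero _)
  obtain ⟨u, hu, hpos⟩ := T.exists_unit_intNorm_eq hγ0 hA hb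
  rcases T.isUnit_iff_intNorm.1 u.isUnit with hN | hN
  · obtain ⟨e, he⟩ := T.isSquare_of_intNorm_eq_one hN hpos
    rcases T.mk0_eq_one_or_classCharacter_eq hA (m := e * b) (by rw [hu, he]; ring) with h | h
    · rw [h, map_one]
    · rw [h, h2]
  · rw [classCharacter_mk0]
    exact T.quarticCharacter_eq_one_of_intNorm_eq_neg_one h2 hA hb hγ hN hpos hu

end PureQuarticTower

/-! ### The quartic class character and the `2`-part of the class number -/

section FiniteCommGroup

variable {G : Type*} [CommGroup G]

theorem mul_orderOf_dvd_card_of_forall_pow_eq_one {M : Type*} [Monoid M] (f : G →* M) {n : ℕ}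
    (hn : n ∣ Nat.card G) (hf : ∀ c, c ^ n = 1 → f c = 1) (d : G) :
    n * orderOf (f d) ∣ Nat.card G := by
  obtain ⟨m, hm⟩ := hn
  rw [hm]
  refine mul_dvd_mul_left n (orderOf_dvd_of_pow_eq_one ?_)
  rw [← map_pow]
  exact hf _ (by rw [← pow_mul, mul_comm, ← hm, pow_card_eq_one'])

variable [Finite G]

theorem odd_card_ker {M : Type*} [Monoid M] (f : G →* M)
    (hf : ∀ c, c ^ 2 = 1 → f c = 1 → c = 1) : Odd (Nat.card f.ker) := by
  rw [← Nat.not_even_iff_odd, even_iff_two_dvd]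
  intro h
  obtain ⟨c, hc⟩ := exists_prime_orderOf_dvd_card' (G := f.ker) 2 h
  have hc2 : (c : G) ^ 2 = 1 := by
    rw [← hc, ← Subgroup.coe_pow, pow_orderOf_eq_one, Subgroup.coe_one]
  have hc1 : c = 1 := Subtype.ext (hf c hc2 c.2)
  simp [hc1] at hc

theorem not_four_dvd_card {F : Type*} [Field F] (f : G →* F) (hpm : ∀ c, f c = 1 ∨ f c = -1)
    (hf : ∀ c, c ^ 2 = 1 → f c = 1 → c = 1) : ¬ 4 ∣ Nat.card G := by
  intro h4
  have hindex : f.ker.index ≤ 2 := by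
    have hker : f.ker = f.toHomUnits.ker := by
      ext c
      rw [MonoidHom.mem_ker, MonoidHom.mem_ker, Units.ext_iff, MonoidHom.coe_toHomUnits,
        Units.val_one]
    have hrange : (f.toHomUnits.range : Set Fˣ) ⊆ {1, -1} := by
      rintro _ ⟨c, rfl⟩
      exact (hpm c).imp Units.ext Units.ext
    rw [hker, Subgroup.index_ker]
    exact (Set.ncard_le_ncard hrange (Set.toFinite _)).trans (Set.ncard_insert_le _ _ |>.trans
      (by rw [Set.ncard_singleton]))
  have hodd := odd_card_ker f hf
  rw [← f.ker.card_mul_index] at h4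
  have h4i : 4 ∣ f.ker.index :=
    (Nat.Coprime.pow_left 2 hodd.coprime_two_left).dvd_of_dvd_mul_left h4
  have := Nat.le_of_dvd (Nat.pos_of_ne_zero f.ker.index_ne_zero_of_finite) h4i
  omega

end FiniteCommGroup

theorem mem_range_of_intCast_mul_mem_range {A : Type*} [CommRing A] {q : ℕ} (hq : q.Prime)
    (hqA : (q : A) = 0) {m : ℤ} (hm : ¬ (q : ℤ) ∣ m) {z : A}
    (h : m * z ∈ (Int.castRingHom A).range) : z ∈ (Int.castRingHom A).range := by
  obtain ⟨s, t, hst⟩ := ((Nat.prime_iff_prime_int.1 hq).coprime_iff_not_dvd.2 hm)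
  have hst' := congrArg (Int.castRingHom A) hst
  simp only [map_add, map_mul, map_one, map_natCast, hqA, mul_zero, zero_add] at hst'
  rw [← one_mul z, ← hst', mul_assoc]
  exact Subring.mul_mem _ ⟨t, rfl⟩ h

namespace PureQuarticTower

variable {p : ℕ} {R S : Type*} [CommRing R] [IsDedekindDomain R] [Module.Finite ℤ R] [CharZero R]
  [CommRing S] [IsDedekindDomain S] [Algebra R S] [Module.Finite R S] [Module.IsTorsionFree R S]
  (T : PureQuarticTower p R S) [Fact p.Prime]

local notation "ι" => algebraMap R S

theorem exists_intCast_sub_mem {q : ℕ} (hq : q.Prime) (hq2 : q ≠ 2) {Q : Ideal S}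
    (hqQ : (q : S) ∈ Q) {s : ℤ} (hs : ¬ (q : ℤ) ∣ s) (hrs : T.r - s ∈ Q) (x : S) :
    ∃ n : ℤ, x - n ∈ Q := by
  let π := Ideal.Quotient.mk Q
  have hq0 : ((q : ℕ) : S ⧸ Q) = 0 := by
    rw [← map_natCast π, Ideal.Quotient.eq_zero_iff_mem.2 hqQ]
  have hq2' : ¬ (q : ℤ) ∣ 2 := by
    rwa [← Nat.cast_ofNat, Int.natCast_dvd_natCast, Nat.prime_dvd_prime_iff_eq hq Nat.prime_two]
  have hr : π T.r = s := by
    rw [← sub_eq_zero, ← map_intCast π, ← map_sub, Ideal.Quotient.eq_zero_iff_mem.2 hrs]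
  have hw : π (ι T.w) = (s ^ 2 : ℤ) := by rw [← T.r_sq, map_pow, hr, Int.cast_pow]
  have hω : π (ι T.ω) ∈ (Int.castRingHom (S ⧸ Q)).range :=
    mem_range_of_intCast_mul_mem_range hq hq0 hq2' ⟨1 + s ^ 2, by
      have h := congrArg (fun x ↦ π (ι x)) T.two_mul_ω
      simp only [map_mul, map_add, map_one, map_ofNat, hw] at h
      rw [eq_intCast, Int.cast_add, Int.cast_one, ← h, Int.cast_ofNat]⟩
  have hR (t : R) : π (ι t) ∈ (Int.castRingHom (S ⧸ Q)).range := by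
    obtain ⟨a, b, rfl⟩ := T.exists_eq_add_mul_ω t
    simp only [map_add, map_mul, map_intCast]
    exact Subring.add_mem _ ⟨a, rfl⟩ (Subring.mul_mem _ ⟨b, rfl⟩ hω)
  obtain ⟨n, hn⟩ : π x ∈ (Int.castRingHom (S ⧸ Q)).range := by
    obtain ⟨t, ht⟩ := T.isQuadraticInvolution_σ.exists_algebraMap_eq_add x
    obtain ⟨y, hy⟩ := T.isQuadraticInvolution_σ.exists_algebraMap_eq_sub_mul T.σ_r x
    have h2s : ¬ (q : ℤ) ∣ 2 * s ^ 2 := fun h ↦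
      ((Nat.prime_iff_prime_int.1 hq).dvd_or_dvd h).elim hq2'
        fun h ↦ hs ((Nat.prime_iff_prime_int.1 hq).dvd_of_dvd_pow h)
    refine mem_range_of_intCast_mul_mem_range hq hq0 h2s ?_
    have hx : (2 * s ^ 2 : ℤ) * π x = s ^ 2 * π (ι t) + s * π (ι y) := by
      rw [ht, hy, map_mul, map_sub, map_add, hr]
      push_cast
      ring
    rw [hx]
    exact Subring.add_mem _ (Subring.mul_mem _ ⟨s ^ 2, by simp⟩ (hR t))
      (Subring.mul_mem _ ⟨s, rfl⟩ (hR y))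
  exact ⟨n, Ideal.Quotient.eq_zero_iff_mem.1 (by
    rw [map_sub, ← hn, map_intCast, eq_intCast, sub_self])⟩

variable [Module.Free ℤ R] [Module.Free ℤ S] [Module.Finite ℤ S]

omit [Fact p.Prime] in
theorem absNorm_span_r_sub_intCast (s : ℤ) :
    (Ideal.span {T.r - s}).absNorm = (s ^ 4 - p : ℤ).natAbs := by
  have hS : Algebra.intNorm R S (T.r - s) = s ^ 2 - T.w :=
    T.isQuadraticInvolution_σ.intNorm_eq_of_algebraMap_eq (by
      rw [map_sub, map_sub, map_pow, map_intCast, map_intCast, T.σ_r, ← T.r_sq]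
      ring)
  rw [absNorm_span_eq_natAbs (R := R), hS]
  congr 1
  refine T.intNorm_eq_of_intCast_eq ?_
  rw [map_sub, map_pow, map_intCast, T.τ_w]
  push_cast
  linear_combination T.w_sq

include T in
theorem exists_absNorm_eq_of_pow_four_eq {q : ℕ} (hq : q.Prime) (hq2 : q ≠ 2) (hqp : q ≠ p)
    {s : ZMod q} (hs : s ^ 4 = p) : ∃ Q : Ideal S, Q.absNorm = q := by
  obtain ⟨s, rfl⟩ := ZMod.intCast_surjective s
  have hdvd : (q : ℤ) ∣ s ^ 4 - p := by
    rw [← ZMod.intCast_zmod_eq_zero_iff_dvd]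
    push_cast
    rw [hs, sub_self]
  obtain ⟨Q, hQ, hQq, hQs⟩ := Ideal.exists_isMaximal_dvd_of_dvd_absNorm' hq (Ideal.span {T.r - s})
    (by rwa [T.absNorm_span_r_sub_intCast, ← Int.natCast_dvd])
  have hqQ : (q : S) ∈ Q := by
    simpa using (hQq.ge (Ideal.mem_span_singleton_self (q : ℤ)) : (q : ℤ) ∈ Q.under ℤ)
  have hqs : ¬ (q : ℤ) ∣ s := by
    intro h
    have hqp' : (q : ℤ) ∣ p := (dvd_sub_right (dvd_pow h four_ne_zero)).1 hdvd
    rw [Int.natCast_dvd_natCast, Nat.prime_dvd_prime_iff_eq hq Fact.out] at hqp'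
    exact hqp hqp'
  exact ⟨Q, absNorm_eq_of_forall_exists_intCast_sub_mem hq hQ.ne_top hqQ
    (T.exists_intCast_sub_mem hq hq2 hqQ hqs (Ideal.dvd_span_singleton.1 hQs))⟩

theorem exists_classCharacter_eq_neg_one : ∃ c : ClassGroup S, T.classCharacter c = -1 := by
  obtain ⟨q, hq, hq4, hqp, hχ, s, hs⟩ :=
    exists_prime_pow_eq_neg_one (p := p) (by have := T.mod_sixteen; omega)
  obtain ⟨Q, hQ⟩ := T.exists_absNorm_eq_of_pow_four_eq hq (by omega) hqp hs
  have hQ0 : Q ≠ ⊥ := by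
    rintro rfl
    exact hq.ne_zero (by simpa using hQ.symm)
  refine ⟨ClassGroup.mk0 ⟨Q, mem_nonZeroDivisors_of_ne_zero hQ0⟩, ?_⟩
  rw [classCharacter_mk0, quarticCharacter_of_not_dvd, hQ, hχ]
  rw [hQ, Nat.prime_dvd_prime_iff_eq Fact.out hq]
  exact hqp.symm

variable [CharZero S] [Finite (ClassGroup R)] [Finite (ClassGroup S)]

include T in
theorem two_dvd_card_classGroup_and_not_four_dvd_iff :
    (2 ∣ Nat.card (ClassGroup S) ∧ ¬ 4 ∣ Nat.card (ClassGroup S)) ↔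
      (2 : ZMod p) ^ ((p - 1) / 4) ≠ 1 := by
  obtain ⟨d, hd⟩ := T.exists_classCharacter_eq_neg_one
  have horder : orderOf (T.classCharacter d) = 2 := by
    rw [hd, orderOf_neg_one, if_neg]
    rw [ZMod.ringChar_zmod_n]
    rintro rfl
    exact absurd T.mod_sixteen (by decide)
  have h2 : 2 ∣ Nat.card (ClassGroup S) :=
    horder ▸ (orderOf_map_dvd T.classCharacter d).trans (orderOf_dvd_natCard d)
  refine ⟨fun h hq ↦ h.2 ?_, fun hq ↦ ⟨h2, ?_⟩⟩
  · have h := mul_orderOf_dvd_card_of_forall_pow_eq_one T.classCharacter h2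
      (fun _ ↦ T.classCharacter_eq_one_of_sq_eq_one hq) d
    rwa [horder] at h
  · refine not_four_dvd_card T.classCharacter T.classCharacter_eq_one_or fun c hc hχ ↦ ?_
    by_contra hc1
    exact hq ((T.classCharacter_eq_of_sq_eq_one hq hc hc1).symm.trans hχ)

end PureQuarticTower

/-! ### The tower of number fields -/

section QuadraticExtension

variable {F L : Type*} [Field F] [Field L] [Algebra F L] [Algebra.IsQuadraticExtension F L]
  [Algebra.IsSeparable F L]

variable (F L) in
theorem existsUnique_gal_ne_one : ∃! σ : Gal(L/F), σ ≠ 1 :=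
  (Nat.card_eq_two_iff' 1).1 <| by
    rw [IsGalois.card_aut_eq_finrank, Algebra.IsQuadraticExtension.finrank_eq_two]

variable {σ : Gal(L/F)} (hσ : σ ≠ 1)

include hσ

theorem eq_one_or_eq_of_ne_one (g : Gal(L/F)) : g = 1 ∨ g = σ :=
  or_iff_not_imp_left.2 fun hg ↦ (existsUnique_gal_ne_one F L).unique hg hσ

theorem apply_apply_of_ne_one (x : L) : σ (σ x) = x := by
  have hσσ : σ * σ = 1 :=
    (eq_one_or_eq_of_ne_one hσ (σ * σ)).resolve_right fun h ↦ hσ (mul_eq_left.1 h)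
  rw [← AlgEquiv.mul_apply, hσσ, AlgEquiv.one_apply]

theorem mem_range_algebraMap_of_apply_eq {x : L} (hx : σ x = x) : x ∈ Set.range (algebraMap F L) :=
  (IsGalois.mem_range_algebraMap_iff_fixed x).2 fun g ↦ by
    rcases eq_one_or_eq_of_ne_one hσ g with rfl | rfl
    exacts [rfl, hx]

theorem algebraMap_norm_eq_mul_apply (x : L) : algebraMap F L (Algebra.norm F x) = x * σ x := by
  classical
  have huniv : (Finset.univ : Finset Gal(L/F)) = {1, σ} := by
    ext g
    simpa using eq_one_or_eq_of_ne_one hσ g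
  rw [Algebra.norm_eq_prod_automorphisms, huniv, Finset.prod_pair hσ.symm, AlgEquiv.one_apply]

theorem apply_eq_neg_of_sq_mem_range {x : L} (hx : x ∉ Set.range (algebraMap F L))
    (hx2 : x ^ 2 ∈ Set.range (algebraMap F L)) : σ x = -x := by
  obtain ⟨c, hc⟩ := hx2
  have hsq : σ x ^ 2 = x ^ 2 := by rw [← map_pow, ← hc, AlgEquiv.commutes]
  exact (sq_eq_sq_iff_eq_or_eq_neg.1 hsq).resolve_left fun h ↦
    hx (mem_range_algebraMap_of_apply_eq hσ h)

variable {A B : Type*} [CommRing A] [IsDedekindDomain A] [CommRing B] [IsDedekindDomain B]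
  [Algebra A B] [Module.Finite A B] [Module.IsTorsionFree A B]
  [Algebra A F] [IsFractionRing A F] [Algebra A L] [IsScalarTower A F L]
  [Algebra B L] [IsScalarTower A B L] [IsIntegralClosure B A L]

theorem isQuadraticInvolution_galRestrict : IsQuadraticInvolution (galRestrict A F L B σ) := by
  have hinj : Function.Injective (algebraMap B L) := IsIntegralClosure.algebraMap_injective B A L
  have : IsFractionRing B L := IsIntegralClosure.isFractionRing_of_finite_extension A F L B
  refine ⟨fun x ↦ hinj ?_, fun x hx ↦ ?_, ?_, fun x ↦ hinj ?_⟩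
  · simp only [algebraMap_galRestrict_apply, apply_apply_of_ne_one hσ]
  · obtain ⟨y, hy⟩ := mem_range_algebraMap_of_apply_eq hσ
      (x := algebraMap B L x) (by rw [← algebraMap_galRestrict_apply A σ x, hx])
    have hy_int : IsIntegral A y := (isIntegral_algebraMap_iff (algebraMap F L).injective).1 <|
      hy ▸ (IsIntegralClosure.isIntegral A L x).map (IsScalarTower.toAlgHom A B L)
    obtain ⟨a, rfl⟩ := IsIntegrallyClosed.isIntegral_iff.1 hy_int
    refine ⟨a, hinj ?_⟩
    rw [← hy, ← IsScalarTower.algebraMap_apply, ← IsScalarTower.algebraMap_apply]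
  · rw [← IsFractionRing.finrank_eq A F B L, Algebra.IsQuadraticExtension.finrank_eq_two]
  · rw [map_mul, algebraMap_galRestrict_apply, ← algebraMap_norm_eq_mul_apply hσ,
      ← Algebra.algebraMap_intNorm (A := A) (K := F), ← IsScalarTower.algebraMap_apply,
      ← IsScalarTower.algebraMap_apply]

end QuadraticExtension

section Units

open NumberField.Units

variable (K : Type*) [Field K] [NumberField K]

set_option maxSynthPendingDepth 3 in
/-- The exponents modulo `2` of a unit with respect to a system of fundamental units. -/
noncomputable def unitExponentsModTwo : (𝓞 K)ˣ →* Multiplicative (Fin (rank K) → ZMod 2) :=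
  (AddMonoidHom.toMultiplicativeRight (((Int.castAddHom (ZMod 2)).compLeft (Fin (rank K))).comp
    (basisModTorsion K).equivFun.toLinearMap.toAddMonoidHom)).comp (QuotientGroup.mk' (torsion K))

set_option maxSynthPendingDepth 3 in
theorem unitExponentsModTwo_surjective : Function.Surjective (unitExponentsModTwo K) := by
  intro v
  choose n hn using fun i ↦ ZMod.intCast_surjective (v.toAdd i)
  obtain ⟨u, hu⟩ := QuotientGroup.mk_surjective ((basisModTorsion K).equivFun.symm n).toMul
  refine ⟨u, Multiplicative.toAdd.injective <| funext fun i ↦ ?_⟩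
  simpa [unitExponentsModTwo, hu, Finsupp.single_apply] using hn i

set_option maxSynthPendingDepth 3 in
theorem unitExponentsModTwo_eq_one_of_mem_torsion {u : (𝓞 K)ˣ} (hu : u ∈ torsion K) :
    unitExponentsModTwo K u = 1 := by
  rw [unitExponentsModTwo, MonoidHom.comp_apply, QuotientGroup.mk'_apply,
    (QuotientGroup.eq_one_iff u).2 hu, map_one]

theorem closure_sup_range_ne_top_of_two_le_rank (h : 2 ≤ rank K) (ε : (𝓞 K)ˣ) :
    Subgroup.closure {-1, ε} ⊔ (powMonoidHom 2 : (𝓞 K)ˣ →* (𝓞 K)ˣ).range ≠ ⊤ := by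
  intro htop
  let V := Fin (rank K) → ZMod 2
  let L : Submodule (ZMod 2) V := ZMod 2 ∙ (unitExponentsModTwo K ε).toAdd
  let H : Subgroup (𝓞 K)ˣ :=
    (AddSubgroup.toSubgroup L.toAddSubgroup).comap (unitExponentsModTwo K)
  have hH : ∀ u, u ∈ H ↔ (unitExponentsModTwo K u).toAdd ∈ L := fun u ↦ Iff.rfl
  have hle : Subgroup.closure {-1, ε} ⊔ (powMonoidHom 2 : (𝓞 K)ˣ →* (𝓞 K)ˣ).range ≤ H := by
    refine sup_le ((Subgroup.closure_le H).2 ?_) ?_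
    · rintro u (rfl | rfl)
      · have hmem : (-1 : (𝓞 K)ˣ) ∈ torsion K :=
          (CommGroup.mem_torsion _).2 (isOfFinOrder_iff_pow_eq_one.2 ⟨2, two_pos, by simp⟩)
        rw [SetLike.mem_coe, hH, unitExponentsModTwo_eq_one_of_mem_torsion K hmem]
        exact L.zero_mem
      · exact Submodule.mem_span_singleton_self _
    · rintro _ ⟨u, rfl⟩
      rw [hH, powMonoidHom_apply, map_pow, toAdd_pow, ZModModule.char_nsmul_eq_zero]
      exact L.zero_mem
  have hspan (v : V) : ∃ c : ZMod 2, c • (unitExponentsModTwo K ε).toAdd = v := by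
    obtain ⟨u, hu⟩ := unitExponentsModTwo_surjective K (Multiplicative.ofAdd v)
    have hu_mem : u ∈ H := hle (htop ▸ Subgroup.mem_top u)
    rwa [hH, hu, toAdd_ofAdd, Submodule.mem_span_singleton] at hu_mem
  have hrank := finrank_le_one _ hspan
  rw [Module.finrank_fin_fun] at hrank
  omega

variable {K}

theorem two_le_rank_of_real_embedding_ne {φ ψ : K →+* ℝ} (hφψ : φ ≠ ψ)
    (hK : 4 ≤ Module.finrank ℚ K) : 2 ≤ rank K := by
  classical
  let place (χ : K →+* ℝ) : {v : InfinitePlace K // v.IsReal} :=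
    ⟨InfinitePlace.mk (Complex.ofRealHom.comp χ), InfinitePlace.isReal_mk_iff.2 <|
      RingHom.ext fun x ↦ Complex.conj_ofReal (χ x)⟩
  have hne : place φ ≠ place ψ := by
    intro h
    have hconj : ComplexEmbedding.conjugate (Complex.ofRealHom.comp φ) = Complex.ofRealHom.comp φ :=
      RingHom.ext fun x ↦ Complex.conj_ofReal (φ x)
    have hcomp := InfinitePlace.mk_eq_iff.1 (Subtype.ext_iff.1 h)
    rw [hconj, or_self] at hcomp
    exact hφψ (RingHom.ext fun x ↦ Complex.ofReal_injective (DFunLike.congr_fun hcomp x))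
  have hreal : 1 < InfinitePlace.nrRealPlaces K := Fintype.one_lt_card_iff.2 ⟨_, _, hne⟩
  have hdeg := InfinitePlace.card_add_two_mul_card_eq_rank K
  have hplaces := InfinitePlace.card_eq_nrRealPlaces_add_nrComplexPlaces K
  rw [rank]
  omega

end Units

section Tower

variable {p : ℕ} [Fact p.Prime] {k : Type*} [Field k] [NumberField k]

omit [NumberField k] in
theorem exists_ringOfIntegers_coe_eq {x : k} (hx : IsIntegral ℤ (x ^ 2)) :
    ∃ y : 𝓞 k, (y : k) = x :=
  ⟨⟨x, .of_pow two_pos hx⟩, rfl⟩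

theorem rat_sq_ne_prime (b : ℚ) : b ^ 2 ≠ p := fun hb ↦
  (Fact.out : p.Prime).prime.irreducible.not_isSquare
    (Rat.isSquare_natCast_iff.1 ⟨b, by rw [← hb, sq]⟩)

theorem finrank_adjoin_eq_two {L : Type*} [Field L] [CharZero L] {w : L} (hw : w ^ 2 = p) :
    Module.finrank ℚ (IntermediateField.adjoin ℚ {w}) = 2 := by
  have hirr : Irreducible (X ^ 2 - C (p : ℚ)) :=
    X_pow_sub_C_irreducible_of_prime Nat.prime_two rat_sq_ne_prime
  have hmonic : (X ^ 2 - C (p : ℚ)).Monic := monic_X_pow_sub_C _ two_ne_zero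
  have hroot : aeval w (X ^ 2 - C (p : ℚ)) = 0 := by simp [hw]
  rw [IntermediateField.adjoin.finrank ⟨_, hmonic, hroot⟩,
    ← minpoly.eq_of_irreducible_of_monic hirr hroot hmonic, natDegree_X_pow_sub_C]

theorem exists_realQuadraticRing (hp4 : p % 4 = 1) (hk : Module.finrank ℚ k = 2) {w : k}
    (hw : w ^ 2 = p) {φ : k →+* ℝ} (hφ : 0 < φ w) :
    ∃ T : RealQuadraticRing p (𝓞 k), (T.w : k) = w := by
  have : Algebra.IsQuadraticExtension ℚ k := ⟨hk⟩
  obtain ⟨τ, hτ, -⟩ := existsUnique_gal_ne_one ℚ k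
  obtain ⟨w, rfl⟩ := exists_ringOfIntegers_coe_eq (hw ▸ isIntegral_natCast p)
  have hw_range : (w : k) ∉ Set.range (algebraMap ℚ k) := by
    rintro ⟨b, hb⟩
    rw [← hb, ← map_pow, ← map_natCast (algebraMap ℚ k)] at hw
    exact rat_sq_ne_prime b ((algebraMap ℚ k).injective hw)
  refine ⟨{ mod_four := hp4
            w := w
            w_sq := RingOfIntegers.ext (by simpa using hw)
            τ := galRestrict ℤ ℚ k (𝓞 k) τ
            isQuadraticInvolution_τ := isQuadraticInvolution_galRestrict hτ
            τ_w := RingOfIntegers.ext ?_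
            φ := φ.comp (algebraMap (𝓞 k) k)
            φ_w_pos := hφ }, rfl⟩
  exact (algebraMap_galRestrict_apply ℤ τ _).trans
    (apply_eq_neg_of_sq_mem_range hτ hw_range ⟨p, by rw [hw, map_natCast]⟩)

theorem nonempty_pureQuarticTower (hp16 : p % 16 = 1) {K : Type*} [Field K] [NumberField K]
    [Algebra k K] (hk : Module.finrank ℚ k = 2) (hK : Module.finrank k K = 2) {w : k}
    (hw : w ^ 2 = p) {r : K} (hr : r ^ 2 = algebraMap k K w) {Φ : K →+* ℝ} (hΦ : 0 < Φ r) :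
    Nonempty (PureQuarticTower p (𝓞 k) (𝓞 K)) := by
  have : Algebra.IsQuadraticExtension k K := ⟨hK⟩
  obtain ⟨σ, hσ, -⟩ := existsUnique_gal_ne_one k K
  obtain ⟨T, rfl⟩ := exists_realQuadraticRing (φ := Φ.comp (algebraMap k K)) (by omega) hk hw
    (by rw [RingHom.comp_apply, ← hr, map_pow]; positivity)
  obtain ⟨r, rfl⟩ := exists_ringOfIntegers_coe_eq (hr ▸ T.w.isIntegral_coe.algebraMap)
  have hr_range : (r : K) ∉ Set.range (algebraMap k K) := by
    rintro ⟨y, hy⟩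
    rw [← hy, ← map_pow, (algebraMap k K).injective.eq_iff] at hr
    obtain ⟨y, rfl⟩ := exists_ringOfIntegers_coe_eq (x := y) (hr ▸ T.w.isIntegral_coe)
    exact T.not_isSquare_w ⟨y, RingOfIntegers.ext (by simp [← hr, sq])⟩
  have hσr : σ r = -r :=
    apply_eq_neg_of_sq_mem_range hσ hr_range ⟨T.w, hr.symm⟩
  have hΦσ : Φ ≠ Φ.comp (σ : K →+* K) := by
    intro h
    have hr_eq := DFunLike.congr_fun h (r : K)
    rw [RingHom.comp_apply, RingHom.coe_coe, hσr, map_neg] at hr_eq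
    linarith
  have hdeg : 4 ≤ Module.finrank ℚ K := by rw [← Module.finrank_mul_finrank ℚ k K, hk, hK]
  exact ⟨{ T with
    mod_sixteen := hp16
    r := r
    r_sq := RingOfIntegers.ext hr
    σ := galRestrict (𝓞 k) k K (𝓞 K) σ
    isQuadraticInvolution_σ := isQuadraticInvolution_galRestrict hσ
    σ_r := RingOfIntegers.ext ((algebraMap_galRestrict_apply (𝓞 k) σ _).trans hσr)
    closure_sup_range_ne_top := closure_sup_range_ne_top_of_two_le_rank K
      (two_le_rank_of_real_embedding_ne hΦσ hdeg) }⟩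

end Tower

theorem finrank_eq_of_algEquiv_adjoinRoot {F A : Type*} [Field F] [CommRing A] [Algebra F A]
    {f : F[X]} (hf : f ≠ 0) (e : A ≃ₐ[F] AdjoinRoot f) : Module.finrank F A = f.natDegree := by
  rw [e.toLinearEquiv.finrank_eq, (AdjoinRoot.powerBasis hf).finrank, AdjoinRoot.powerBasis_dim]

theorem exists_pow_eq_and_real_embedding_pos {A : Type*} [CommRing A] [Algebra ℚ A] {n : ℕ}
    (hn : n ≠ 0) {a : ℚ} (ha : 0 < a) (e : A ≃ₐ[ℚ] AdjoinRoot (X ^ n - C a)) :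
    ∃ (r : A) (Φ : A →+* ℝ), r ^ n = algebraMap ℚ A a ∧ 0 < Φ r := by
  have ha' : (0 : ℝ) < a := mod_cast ha
  let t : ℝ := (a : ℝ) ^ (n⁻¹ : ℝ)
  have hta : t ^ n = a := Real.rpow_inv_natCast_pow ha'.le hn
  let Φ : AdjoinRoot (X ^ n - C a) →+* ℝ := AdjoinRoot.lift (algebraMap ℚ ℝ) t (by simp [hta])
  have hroot := AdjoinRoot.eval₂_root (X ^ n - C a)
  rw [eval₂_sub, eval₂_X_pow, eval₂_C, sub_eq_zero] at hroot
  refine ⟨e.symm (AdjoinRoot.root _), Φ.comp e, ?_, ?_⟩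
  · rw [← map_pow, hroot, ← AdjoinRoot.algebraMap_eq, AlgEquiv.commutes]
  · simpa [Φ] using Real.rpow_pos_of_pos ha' _

theorem exists_pureQuarticTower {p : ℕ} [Fact p.Prime] (hp16 : p % 16 = 1) {K : Type*} [Field K]
    [NumberField K] (e : K ≃ₐ[ℚ] AdjoinRoot (X ^ 4 - C (p : ℚ))) :
    ∃ k : IntermediateField ℚ K, Nonempty (PureQuarticTower p (𝓞 k) (𝓞 K)) := by
  have hp0 : (0 : ℚ) < p := mod_cast (Fact.out : p.Prime).pos
  obtain ⟨r, Φ, hr, hΦ⟩ := exists_pow_eq_and_real_embedding_pos four_ne_zero hp0 e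
  rw [map_natCast] at hr
  have hw : (r ^ 2) ^ 2 = p := by rw [← pow_mul, hr]
  let k := IntermediateField.adjoin ℚ {r ^ 2}
  have hk : Module.finrank ℚ k = 2 := finrank_adjoin_eq_two hw
  have hK : Module.finrank k K = 2 := by
    have hdeg := Module.finrank_mul_finrank ℚ k K
    rw [hk, finrank_eq_of_algEquiv_adjoinRoot (monic_X_pow_sub_C _ four_ne_zero).ne_zero e,
      natDegree_X_pow_sub_C] at hdeg
    omega
  refine ⟨k, nonempty_pureQuarticTower hp16 hk hK
    (w := IntermediateField.AdjoinSimple.gen ℚ (r ^ 2)) ((algebraMap k K).injective ?_)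
    (IntermediateField.AdjoinSimple.algebraMap_gen ℚ _).symm hΦ⟩
  rw [map_pow, IntermediateField.AdjoinSimple.algebraMap_gen, hw, map_natCast]

end PureQuartic

open PureQuartic in
/-- For a prime `p ≡ 1 (mod 16)` and `K = ℚ(⁴√p)`, one has `2 ∥ h_K`
(i.e. `2 ∣ h_K` and `4 ∤ h_K`) if and only if the quartic residue symbol `(2/p)₄ = -1`,
i.e. iff `2` is not a fourth power modulo `p`. -/
theorem two_exactly_divides_classNumber_pure_quartic_iff
    (p : ℕ) (hp : p.Prime) (hmod : p % 16 = 1)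
    (K : Type*) [Field K] [NumberField K]
    (hK : Nonempty (K ≃ₐ[ℚ] AdjoinRoot (X ^ 4 - C (p : ℚ)))) :
    (2 ∣ classNumber K ∧ ¬ 4 ∣ classNumber K) ↔ ¬ ∃ x : ZMod p, x ^ 4 = 2 := by
  have : Fact p.Prime := ⟨hp⟩
  have h2 : (2 : ZMod p) ≠ 0 := mod_cast ZMod.prime_ne_zero p 2 (by omega)
  obtain ⟨e⟩ := hK
  obtain ⟨k, ⟨T⟩⟩ := exists_pureQuarticTower hmod e
  rw [exists_pow_eq_iff_pow_eq_one (by rw [Nat.card_zmod]; exact T.four_dvd) h2,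
    Nat.card_zmod, classNumber, ← Nat.card_eq_fintype_card]
  exact T.two_dvd_card_classGroup_and_not_four_dvd_iff
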